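/- arXiv:2203.00726 — 8 statements merged into one kernel-verified Lean document; each statement's English description precedes it below -/
import Mathlib

section
/- Let G be a finite nilpotent group and X a subset of G. Then X invariably generates G if and only if X generates G. -/
/-! In a nilpotent group the normalizer condition makes every maximal subgroup normal. If some
family of conjugates of the elements of `X` fails to generate the finite group `G`, it lies in a
maximal subgroup `M`; since `M` is normal, `X` itself lies in `M`, so `X` does not generate `G`. -/

/-- A subset `S` invariably generates `G` if for every choice of conjugators
(one for each element), the conjugated set generates `G`. -/
def InvGen {G : Type*} [Group G] (S : Set G) : Prop :=
  ∀ σ : G → G, Subgroup.closure ((fun g => (σ g)⁻¹ * g * σ g) '' S) = ⊤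

/-- `S` is a minimal invariable generating set of `G`. -/
def MinInvGen {G : Type*} [Group G] (S : Set G) : Prop :=
  InvGen S ∧ ∀ T : Set G, T ⊂ S → ¬ InvGen T

/-- `S` is a minimal generating set of `G`. -/
def MinGen {G : Type*} [Group G] (S : Set G) : Prop :=
  Subgroup.closure S = ⊤ ∧ ∀ T : Set G, T ⊂ S → Subgroup.closure T ≠ ⊤

/-- `m(G)`: largest cardinality of a minimal generating set of `G`. -/
noncomputable def mGen (G : Type*) [Group G] : ℕ :=
  sSup {n : ℕ | ∃ S : Set G, MinGen S ∧ S.ncard = n}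

/-- `m_I(G)`: largest cardinality of a minimal invariable generating set of `G`. -/
noncomputable def mInv (G : Type*) [Group G] : ℕ :=
  sSup {n : ℕ | ∃ S : Set G, MinInvGen S ∧ S.ncard = n}

/-- `d_I(G)`: smallest cardinality of a minimal invariable generating set of `G`. -/
noncomputable def dInv (G : Type*) [Group G] : ℕ :=
  sInf {n : ℕ | ∃ S : Set G, MinInvGen S ∧ S.ncard = n}

/-- The union of all conjugates of a subgroup `M`, as a set. -/
def conjUnion {G : Type*} [Group G] (M : Subgroup G) : Set G :=
  ⋃ g : G, (fun m => g⁻¹ * m * g) '' (M : Set G)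

/-- For a finite nilpotent group `G` and `X ⊆ G`, `X` invariably
generates `G` iff `X` generates `G`. -/
theorem stmt1 {G : Type*} [Group G] [Finite G] [Group.IsNilpotent G] (X : Set G) :
    InvGen X ↔ Subgroup.closure X = ⊤ := by
  constructor
  · intro h
    simpa using h (fun _ => 1)
  · intro hX σ
    rcases eq_top_or_exists_le_coatom
      (Subgroup.closure ((fun g => (σ g)⁻¹ * g * σ g) '' X)) with h | ⟨M, hM, hle⟩
    · exact h
    · have hN : M.Normal :=
        Subgroup.NormalizerCondition.normal_of_coatom M Group.normalizerCondition_of_isNilpotent hM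
      refine absurd (top_le_iff.mp ?_) hM.1
      rw [← hX, Subgroup.closure_le]
      intro x hx
      have hc : (σ x)⁻¹ * x * σ x ∈ M :=
        hle (Subgroup.subset_closure (Set.mem_image_of_mem _ hx))
      simpa [mul_assoc] using hN.conj_mem _ hc (σ x)
end

section
/- Let G be a finite group, N an abelian normal subgroup of G, and π : G → G/N the natural projection. Let X be a subset of G such that π(X) invariably generates G/N, and let Y be a subset of N whose normal closure in G equals N (i.e., Y generates N as a G-module). Then X ∪ Y invariably generates G. -/
/-- If `N` is an abelian normal subgroup of a finite group `G`,
`π(X)` invariably generates `G/N`, and `Y ⊆ N` generates `N` as a `G`-module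
(i.e. the normal closure of `Y` in `G` is `N`), then `X ∪ Y` invariably
generates `G`. -/
theorem stmt2 {G : Type*} [Group G] [Finite G] (N : Subgroup G) [N.Normal]
    (habelian : ∀ x ∈ N, ∀ y ∈ N, x * y = y * x)
    (X : Set G) (hX : InvGen ((QuotientGroup.mk' N) '' X))
    (Y : Set G) (hYN : Y ⊆ (N : Set G)) (hY : Subgroup.normalClosure Y = N) :
    InvGen (X ∪ Y) := by
  intro σ
  set H := Subgroup.closure ((fun g => (σ g)⁻¹ * g * σ g) '' (X ∪ Y)) with hH
  have hmem : ∀ g ∈ X ∪ Y, (σ g)⁻¹ * g * σ g ∈ H := fun g hg =>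
    Subgroup.subset_closure ⟨g, hg, rfl⟩
  have hmap : H.map (QuotientGroup.mk' N) = ⊤ := by
    classical
    -- `π` need not be injective on `X`, so the conjugator of a coset in `π(X)` is read off from
    -- a chosen representative in `X`.
    let τ : G ⧸ N → G ⧸ N := fun q =>
      if h : ∃ x ∈ X, QuotientGroup.mk' N x = q then QuotientGroup.mk' N (σ h.choose) else 1
    rw [eq_top_iff, ← hX τ, Subgroup.closure_le]
    rintro _ ⟨q, hq, rfl⟩
    have hq' : ∃ x ∈ X, QuotientGroup.mk' N x = q := hq
    refine ⟨_, hmem hq'.choose (Or.inl hq'.choose_spec.1), ?_⟩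
    have hτ : τ q = QuotientGroup.mk' N (σ hq'.choose) := dif_pos hq'
    simp only [hτ, map_mul, map_inv, hq'.choose_spec.2]
  have hdecomp : ∀ g : G, ∃ h ∈ H, ∃ n ∈ N, g = h * n := by
    intro g
    have hg : QuotientGroup.mk' N g ∈ H.map (QuotientGroup.mk' N) := hmap ▸ Subgroup.mem_top _
    obtain ⟨h, hh, e⟩ := hg
    exact ⟨h, hh, h⁻¹ * g, QuotientGroup.eq.mp e, by group⟩
  have hNH : N ≤ H := by
    rw [← hY]
    refine (Subgroup.closure_le _).2 fun z hz => ?_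
    obtain ⟨y, hy, hyz⟩ := Group.mem_conjugatesOfSet_iff.mp hz
    obtain ⟨g, rfl⟩ := isConj_iff.mp hyz
    -- With `g * σ y = h * n`, the conjugate of `y` by `g` is that of its conjugate in `H` by `h`.
    obtain ⟨h, hh, n, hn, e⟩ := hdecomp (g * σ y)
    have hyN : (σ y)⁻¹ * y * σ y ∈ N := by
      simpa using (inferInstance : N.Normal).conj_mem y (hYN hy) (σ y)⁻¹
    have key : g * y * g⁻¹ = h * ((σ y)⁻¹ * y * σ y) * h⁻¹ := by
      calc g * y * g⁻¹ = (g * σ y) * ((σ y)⁻¹ * y * σ y) * (g * σ y)⁻¹ := by group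
        _ = h * (n * ((σ y)⁻¹ * y * σ y)) * n⁻¹ * h⁻¹ := by rw [e]; group
        _ = h * ((σ y)⁻¹ * y * σ y) * h⁻¹ := by rw [habelian n hn _ hyN]; group
    rw [key]
    exact H.mul_mem (H.mul_mem hh (hmem y (Or.inr hy))) (H.inv_mem hh)
  rw [eq_top_iff]
  intro g _
  obtain ⟨h, hh, n, hn, rfl⟩ := hdecomp g
  exact H.mul_mem hh (hNH hn)
end

section
/- Let G = Alt(29), the alternating group on 29 points, and consider the elements a = (2,3,4)(5,6,7)(8,9,10,11,12,13,14,15,16,17,18)(19,20,21,22,23,24,25,26,27,28,29), b = (1,2)(3,4)(5,6,7,8,9,10,11,12,13,14,15,16,17,18,19,20,21,22,23,24,25,26,27,28,29), and c = (1,2)(3,4,5,6,7,8)(9,10,11,12,13,14,15,16,17,18,19,20,21,22,23,24,25,26,27,28,29). Then {a, b, c} is a minimal invariable generating set of G, but for every x, y, z ∈ G the set {x⁻¹ax, y⁻¹by, z⁻¹cz} is not a minimal generating set of G. -/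
/-- A subset `S` of the subgroup `K` invariably generates `K` if for every choice
of conjugators in `K` (one for each element), the conjugated set generates `K`. -/
def InvGenIn {G : Type*} [Group G] (K : Subgroup G) (S : Set G) : Prop :=
  ∀ σ : G → G, (∀ g, σ g ∈ K) →
    Subgroup.closure ((fun g => (σ g)⁻¹ * g * σ g) '' S) = K

/-- `S` is a minimal invariable generating set of the subgroup `K`. -/
def MinInvGenIn {G : Type*} [Group G] (K : Subgroup G) (S : Set G) : Prop :=
  InvGenIn K S ∧ ∀ T : Set G, T ⊂ S → ¬ InvGenIn K T

/-- `S` is a minimal generating set of the subgroup `K`. -/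
def MinGenIn {G : Type*} [Group G] (K : Subgroup G) (S : Set G) : Prop :=
  Subgroup.closure S = K ∧ ∀ T : Set G, T ⊂ S → Subgroup.closure T ≠ K

namespace Alt29

open Equiv Finset

/-! ### Invariant sets of points -/

/-- The set `S` of points is invariant under the permutation `g`. -/
def Inv29 (g : Perm (Fin 29)) (S : Finset (Fin 29)) : Prop :=
  ∀ i, g i ∈ S ↔ i ∈ S

lemma perm_apply_inv (g : Perm (Fin 29)) (i : Fin 29) : g (g⁻¹ i) = i := g.apply_symm_apply i

lemma perm_inv_apply (g : Perm (Fin 29)) (i : Fin 29) : g⁻¹ (g i) = i := g.symm_apply_apply i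

lemma Inv29.one (S : Finset (Fin 29)) : Inv29 1 S := fun _ => Iff.rfl

lemma Inv29.mul {g h : Perm (Fin 29)} {S : Finset (Fin 29)} (hg : Inv29 g S) (hh : Inv29 h S) :
    Inv29 (g * h) S := fun i => (hg (h i)).trans (hh i)

lemma Inv29.inv {g : Perm (Fin 29)} {S : Finset (Fin 29)} (hg : Inv29 g S) :
    Inv29 g⁻¹ S := fun i => by simpa using (hg (g⁻¹ i)).symm

lemma Inv29.pow {g : Perm (Fin 29)} {S : Finset (Fin 29)} (hg : Inv29 g S) (n : ℕ) :
    Inv29 (g ^ n) S := by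
  induction n with
  | zero => exact Inv29.one S
  | succ n ih => rw [pow_succ]; exact ih.mul hg

lemma Inv29.compl {g : Perm (Fin 29)} {S : Finset (Fin 29)} (hg : Inv29 g S) :
    Inv29 g Sᶜ := fun i => by simpa using not_congr (hg i)

lemma Inv29.closure {X : Set (Perm (Fin 29))} {S : Finset (Fin 29)}
    (hX : ∀ g ∈ X, Inv29 g S) {g : Perm (Fin 29)} (hg : g ∈ Subgroup.closure X) : Inv29 g S := by
  induction hg using Subgroup.closure_induction with
  | mem x hx => exact hX x hx
  | one => exact Inv29.one S
  | mul x y _ _ h1 h2 => exact h1.mul h2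
  | inv x _ h => exact h.inv

/-- If `S` is invariant under `x⁻¹ * g * x`, then its image `x(S)` is invariant under `g`. -/
lemma Inv29.conj {g x : Perm (Fin 29)} {S : Finset (Fin 29)} (h : Inv29 (x⁻¹ * g * x) S) :
    Inv29 g (S.map x.toEmbedding) := by
  intro i
  have := h (x⁻¹ i)
  simp only [Perm.mul_apply, perm_apply_inv] at this
  simp only [Finset.mem_map_equiv]
  exact this

/-! ### Elements of small support and 3-cycles -/

/-- If the supports of `t` and `s` meet exactly in `q`, their commutator is the 3-cycle
`q ↦ t q ↦ s q ↦ q`. -/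
lemma support_commutator {t s : Perm (Fin 29)} {q : Fin 29} (htq : t q ≠ q) (hsq : s q ≠ q)
    (h : ∀ i, t i ≠ i → s i ≠ i → i = q) :
    (t * s * t⁻¹ * s⁻¹).support = {q, t q, s q} := by
  have st : ∀ i, t i ≠ i → i ≠ q → s i = i := fun i h1 h2 => by
    by_contra h3; exact h2 (h i h1 h3)
  have ts : ∀ i, s i ≠ i → i ≠ q → t i = i := fun i h1 h2 => by
    by_contra h3; exact h2 (h i h3 h1)
  have it : ∀ i, t⁻¹ (t i) = i := fun i => by simp
  have ti : ∀ i, t (t⁻¹ i) = i := fun i => by simp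
  have is : ∀ i, s⁻¹ (s i) = i := fun i => by simp
  have si : ∀ i, s (s⁻¹ i) = i := fun i => by simp
  ext i
  simp only [Perm.mem_support, Perm.mul_apply, Finset.mem_insert, Finset.mem_singleton]
  generalize t⁻¹ = t' at *
  generalize s⁻¹ = s' at *
  grind

lemma isThreeCycle_commutator {t s : Perm (Fin 29)} {q : Fin 29} (htq : t q ≠ q) (hsq : s q ≠ q)
    (h : ∀ i, t i ≠ i → s i ≠ i → i = q) :
    (t * s * t⁻¹ * s⁻¹).IsThreeCycle := by
  rw [← card_support_eq_three_iff, support_commutator htq hsq h]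
  have : t q ≠ s q := by
    intro e
    have := h (t q) (by simpa using htq) (by rw [e]; simpa using hsq)
    exact htq this
  rw [Finset.card_eq_three]
  exact ⟨q, t q, s q, htq.symm, hsq.symm, this, rfl⟩

/-- Let `H` fix `q` and be transitive on the other 28 points. If `H` always moved some point of `D`
into `D`, counting triples `(h, i, h i)` with `i, h i ∈ D` would give
`|H| ≤ |D|² · |H| / 28`, which is impossible for `|D| ≤ 5`. -/
lemma exists_disjoint_translate (H : Subgroup (Perm (Fin 29))) (q : Fin 29)
    (hq : ∀ h ∈ H, h q = q) (hH : ∀ i j, i ≠ q → j ≠ q → ∃ h ∈ H, h i = j)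
    (D : Finset (Fin 29)) (hqD : q ∉ D) (hD : #D ≤ 5) :
    ∃ h ∈ H, ∀ i ∈ D, h i ∉ D := by
  classical
  by_contra! hcon
  rcases D.eq_empty_or_nonempty with rfl | ⟨i₀, hi₀⟩
  · obtain ⟨i, hi, _⟩ := hcon 1 H.one_mem
    simp at hi
  have hne : ∀ i ∈ D, i ≠ q := fun i hi e => hqD (e ▸ hi)
  -- The number of elements of `H` taking `i` to `j`; it does not depend on `i, j ≠ q`.
  let N : Fin 29 → Fin 29 → ℕ := fun i j => #{h : H | (h : Perm (Fin 29)) i = j}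
  have hN : ∀ i j, i ≠ q → j ≠ q → N i j = N i₀ i₀ := by
    intro i j hi hj
    obtain ⟨u, hu, huj⟩ := hH j i₀ hj (hne _ hi₀)
    obtain ⟨v, hv, hvi⟩ := hH i₀ i (hne _ hi₀) hi
    refine Finset.card_equiv ((Equiv.mulLeft (⟨u, hu⟩ : H)).trans (Equiv.mulRight (⟨v, hv⟩ : H)))
      (fun h => ?_)
    simp only [Finset.mem_filter, Finset.mem_univ, true_and, Equiv.trans_apply,
      Equiv.coe_mulLeft, Equiv.coe_mulRight, Subgroup.coe_mul, Perm.mul_apply, hvi]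
    rw [← huj]
    exact (Equiv.injective u).eq_iff.symm
  have hcard : Fintype.card H = 28 * N i₀ i₀ := by
    have h1 : Fintype.card H = ∑ j ∈ univ.erase q, N i₀ j := by
      rw [← Finset.card_univ]
      refine Finset.card_eq_sum_card_fiberwise (f := fun h : H => (h : Perm (Fin 29)) i₀) ?_
      intro h _
      simp only [Finset.coe_erase, Finset.coe_univ, Set.mem_sdiff, Set.mem_univ,
        Set.mem_singleton_iff, true_and]
      intro e
      have := hq h h.2
      exact hne _ hi₀ ((h : Perm (Fin 29)).injective (e.trans this.symm))
    rw [h1, Finset.sum_congr rfl (fun j hj => hN i₀ j (hne _ hi₀) (Finset.ne_of_mem_erase hj))]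
    simp
  have hle : Fintype.card H ≤ ∑ p ∈ D ×ˢ D, N p.1 p.2 := by
    rw [← Finset.card_univ]
    refine le_trans (Finset.card_le_card ?_) Finset.card_biUnion_le
    intro h _
    obtain ⟨i, hi, hj⟩ := hcon h h.2
    simp only [Finset.mem_biUnion, Finset.mem_product, Finset.mem_filter, Finset.mem_univ,
      true_and]
    exact ⟨(i, (h : Perm (Fin 29)) i), ⟨hi, hj⟩, rfl⟩
  rw [Finset.sum_congr rfl (fun p hp => hN p.1 p.2
    (hne _ (Finset.mem_product.1 hp).1) (hne _ (Finset.mem_product.1 hp).2))] at hle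
  rw [Finset.sum_const, Finset.card_product, smul_eq_mul, hcard] at hle
  have hpos : 0 < N i₀ i₀ := Finset.card_pos.2 ⟨1, by simp⟩
  have : #D * #D ≤ 25 := Nat.mul_le_mul hD hD
  nlinarith

lemma primitive29 (G : Subgroup (Perm (Fin 29))) (hG : ∀ i j, ∃ g ∈ G, g i = j) :
    MulAction.IsPreprimitive G (Fin 29) := by
  have : MulAction.IsPretransitive G (Fin 29) :=
    ⟨fun i j => by obtain ⟨g, hg, h⟩ := hG i j; exact ⟨⟨g, hg⟩, h⟩⟩
  exact MulAction.IsPreprimitive.of_prime_card (by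
    rw [Nat.card_eq_fintype_card, Fintype.card_fin]; norm_num)

/-- A transitive group of degree 29 with a point stabilizer transitive on the remaining points
contains `Alt(29)` as soon as it contains a nontrivial element moving at most 6 points. -/
lemma alt_le (G : Subgroup (Perm (Fin 29))) (hG : ∀ i j, ∃ g ∈ G, g i = j) (q : Fin 29)
    (hq : ∀ i j, i ≠ q → j ≠ q → ∃ h ∈ G, h q = q ∧ h i = j)
    {t : Perm (Fin 29)} (ht : t ∈ G) (ht1 : t ≠ 1) (ht6 : #t.support ≤ 6) :
    alternatingGroup (Fin 29) ≤ G := by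
  -- Conjugate `t` so that it moves `q`.
  obtain ⟨p, hp⟩ : ∃ p, t p ≠ p := by
    by_contra! h; exact ht1 (Equiv.ext h)
  obtain ⟨g, hg, hgp⟩ := hG p q
  set s := g * t * g⁻¹ with hs
  have hsG : s ∈ G := G.mul_mem (G.mul_mem hg ht) (G.inv_mem hg)
  have hsq : s q ≠ q := by
    rw [hs, ← hgp]; simpa using hp
  have hs6 : #s.support ≤ 6 := by rw [hs, Perm.card_support_conj]; exact ht6
  obtain ⟨h, hhH, hdis⟩ := exists_disjoint_translate
    (G ⊓ MulAction.stabilizer (Perm (Fin 29)) q) q (fun h hh => hh.2)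
    (fun i j hi hj => by
      obtain ⟨h, h1, h2, h3⟩ := hq i j hi hj
      exact ⟨h, ⟨h1, h2⟩, h3⟩)
    (s.support.erase q) (by simp)
    (by rw [Finset.card_erase_of_mem (by simpa using hsq)]; omega)
  have hhq : h q = q := hhH.2
  have hhq' : h⁻¹ q = q := by rw [Perm.inv_eq_iff_eq]; exact hhq.symm
  have h3 : (s * (h * s * h⁻¹) * s⁻¹ * (h * s * h⁻¹)⁻¹).IsThreeCycle := by
    refine isThreeCycle_commutator (q := q) hsq ?_ ?_
    · simp only [Perm.mul_apply, hhq']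
      intro e
      apply hsq
      apply h.injective
      rw [e, hhq]
    · intro i hi hi'
      by_contra hiq
      refine hdis (h⁻¹ i) ?_ ?_
      · simp only [Finset.mem_erase, Perm.mem_support]
        refine ⟨fun e => hiq ?_, fun e => hi' ?_⟩
        · rw [Perm.inv_eq_iff_eq] at e; rw [e, hhq]
        · rw [Perm.mul_apply, Perm.mul_apply, e, perm_apply_inv]
      · simpa using ⟨hiq, hi⟩
  have hr : h * s * h⁻¹ ∈ G := G.mul_mem (G.mul_mem hhH.1 hsG) (G.inv_mem hhH.1)
  exact Equiv.Perm.alternatingGroup_le_of_isPreprimitive_of_isThreeCycle_mem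
    (primitive29 G hG) h3
    (G.mul_mem (G.mul_mem (G.mul_mem hsG hr) (G.inv_mem hsG)) (G.inv_mem hr))

/-! ### Orbits of a point stabilizer -/

/-- If `x ≠ 1` has a fixed point, then distinct points `α`, `β` are separated by some `G`-conjugate of
`x` fixing `α` but not `β`. Otherwise the points fixed by the same conjugates of `x` as `α` would
form a nontrivial block. -/
lemma eq_of_fixed_imp_fixed (G : Subgroup (Perm (Fin 29))) (hG : ∀ i j, ∃ g ∈ G, g i = j)
    {x : Perm (Fin 29)} (hx1 : x ≠ 1) {p : Fin 29} (hp : x p = p)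
    {α β : Fin 29} (h : ∀ g ∈ G, (g * x * g⁻¹) α = α → (g * x * g⁻¹) β = β) : β = α := by
  classical
  -- As `G` is transitive, equally many conjugators give an element fixing `α` as one fixing `β`,
  -- so the implication is an equivalence.
  have key : ∀ g : G, ((g : Perm (Fin 29)) * x * (g : Perm (Fin 29))⁻¹) α = α ↔
      ((g : Perm (Fin 29)) * x * (g : Perm (Fin 29))⁻¹) β = β := by
    obtain ⟨k, hk, hkα⟩ := hG α β
    have hcard : #{g : G | ((g : Perm (Fin 29)) * x * (g : Perm (Fin 29))⁻¹) α = α} =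
        #{g : G | ((g : Perm (Fin 29)) * x * (g : Perm (Fin 29))⁻¹) β = β} := by
      refine Finset.card_equiv (Equiv.mulLeft (⟨k, hk⟩ : G)) (fun g => ?_)
      rw [Finset.mem_filter, Finset.mem_filter]
      simp only [Finset.mem_univ, true_and, Equiv.coe_mulLeft,
        Subgroup.coe_mul, Perm.mul_apply, mul_inv_rev, ← hkα, perm_inv_apply]
      exact k.injective.eq_iff.symm
    have heq := Finset.eq_of_subset_of_card_le (s := {g : G |
        ((g : Perm (Fin 29)) * x * (g : Perm (Fin 29))⁻¹) α = α} ) (t := {g : G |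
        ((g : Perm (Fin 29)) * x * (g : Perm (Fin 29))⁻¹) β = β})
      (fun g hg => by
        simp only [Finset.mem_filter, Finset.mem_univ, true_and] at hg ⊢
        exact h g g.2 hg) hcard.ge
    intro g
    have := Finset.ext_iff.1 heq g
    simpa only [Finset.mem_filter, Finset.mem_univ, true_and] using this
  -- `r` is the equivalence relation of being fixed by the same conjugates of `x`.
  let r : Fin 29 → Fin 29 → Prop := fun i j => ∀ g : G,
    ((g : Perm (Fin 29)) * x * (g : Perm (Fin 29))⁻¹) i = i ↔
      ((g : Perm (Fin 29)) * x * (g : Perm (Fin 29))⁻¹) j = j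
  have hr : ∀ (k : G) i j, r i j → r ((k : Perm (Fin 29)) i) ((k : Perm (Fin 29)) j) := by
    intro k i j hij g
    have := hij (k⁻¹ * g)
    simp only [Subgroup.coe_mul, Subgroup.coe_inv, mul_inv_rev, inv_inv, Perm.mul_apply,
      Perm.inv_eq_iff_eq] at this
    simp only [Perm.mul_apply]
    exact this
  have hblock : MulAction.IsBlock G {j | r α j} := by
    rw [MulAction.isBlock_iff_smul_eq_of_nonempty]
    rintro k ⟨j, ⟨i, hi, hij⟩, hj⟩
    have hij : (k : Perm (Fin 29)) i = j := hij
    have hi : r α i := hi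
    have hj : r α j := hj
    have hkα : r α ((k : Perm (Fin 29)) α) := by
      have := hr k _ _ hi
      rw [hij] at this
      exact fun g => (hj g).trans (this g).symm
    ext m
    rw [Set.mem_smul_set_iff_inv_smul_mem]
    change r α ((k : Perm (Fin 29))⁻¹ m) ↔ r α m
    constructor
    · intro hm
      have := hr k _ _ hm
      rw [perm_apply_inv] at this
      exact fun g => (hkα g).trans (this g)
    · intro hm
      have := hr k⁻¹ _ _ (fun g => (hkα g).symm.trans (hm g))
      simpa using this
  have := primitive29 G hG
  rcases MulAction.IsPreprimitive.isTrivialBlock_of_isBlock hblock with hs | hu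
  · exact hs key (fun _ => Iff.rfl)
  · exfalso
    obtain ⟨g, hg, hgp⟩ := hG p α
    apply hx1
    ext1 i
    have : r α (g i) := by
      have : g i ∈ {j | r α j} := by rw [hu]; trivial
      exact this
    have := (this ⟨g, hg⟩).1 (by simp [← hgp, hp])
    simpa using this

/-- Every orbit of the stabilizer of `q` other than `{q}` has at least `m` points, because of `x`, and
one of them has more than `28 - m` points, because of `y`; so it is the only one. Cycle lengths are
expressed through the sizes of invariant sets. -/
lemma stab_transitive (G : Subgroup (Perm (Fin 29))) (hG : ∀ i j, ∃ g ∈ G, g i = j) (m : ℕ)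
    {x : Perm (Fin 29)} (hxG : x ∈ G) (hx1 : x ≠ 1) {p : Fin 29} (hp : x p = p)
    (hx : ∀ S, Inv29 x S → #S < m → ∀ i ∈ S, x i = i)
    {y : Perm (Fin 29)} (hyG : y ∈ G) {q r : Fin 29} (hq : y q = q) (hqr : r ≠ q)
    (hy : ∀ S, Inv29 y S → r ∈ S → 28 < #S + m) :
    ∀ i j, i ≠ q → j ≠ q → ∃ h ∈ G, h q = q ∧ h i = j := by
  classical
  -- `O i` is the orbit of `i` under the stabilizer of `q` in `G`.
  let O : Fin 29 → Finset (Fin 29) := fun i => {j | ∃ h ∈ G, h q = q ∧ h i = j}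
  have mO : ∀ i j, j ∈ O i ↔ ∃ h ∈ G, h q = q ∧ h i = j := fun i j => by simp [O]
  have hself : ∀ i, i ∈ O i := fun i => (mO i i).2 ⟨1, G.one_mem, rfl, rfl⟩
  have hinv : ∀ i, ∀ g ∈ G, g q = q → Inv29 g (O i) := by
    intro i g hg hgq j
    rw [mO, mO]
    constructor
    · rintro ⟨h, h1, h2, h3⟩
      refine ⟨g⁻¹ * h, G.mul_mem (G.inv_mem hg) h1, ?_, ?_⟩
      · rw [Perm.mul_apply, h2, Perm.inv_eq_iff_eq, hgq]
      · rw [Perm.mul_apply, h3, perm_inv_apply]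
    · rintro ⟨h, h1, h2, h3⟩
      exact ⟨g * h, G.mul_mem hg h1, by rw [Perm.mul_apply, h2, hgq], by rw [Perm.mul_apply, h3]⟩
  have hqO : ∀ i, i ≠ q → q ∉ O i := by
    intro i hi hqi
    obtain ⟨h, h1, h2, h3⟩ := (mO i q).1 hqi
    exact hi (h.injective (h3.trans h2.symm))
  have hbig := hy (O r) (hinv r y hyG hq) (hself r)
  have hall : ∀ i, i ≠ q → i ∈ O r := by
    intro i hi
    by_contra hir
    have hdisj : Disjoint (O r) (O i) := by
      rw [Finset.disjoint_left]
      intro j hj hj'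
      obtain ⟨h, h1, h2, h3⟩ := (mO i j).1 hj'
      have := hinv r h h1 h2 i
      rw [h3] at this
      exact hir (this.1 hj)
    have hsmall : #(O i) < m := by
      have h1 : #(O r ∪ O i) ≤ #(univ.erase q) := Finset.card_le_card (by
        intro j hj
        rw [Finset.mem_erase]
        refine ⟨?_, Finset.mem_univ _⟩
        rintro rfl
        rcases Finset.mem_union.1 hj with h | h
        · exact hqO r hqr h
        · exact hqO i hi h)
      rw [Finset.card_union_of_disjoint hdisj] at h1
      simp at h1
      omega
    refine hi (eq_of_fixed_imp_fixed G hG hx1 hp ?_)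
    intro g hg hgq
    have h1 : Inv29 (g * x * g⁻¹) (O i) :=
      hinv i _ (G.mul_mem (G.mul_mem hg hxG) (G.inv_mem hg)) hgq
    have h2 : Inv29 x ((O i).map (g⁻¹ : Perm (Fin 29)).toEmbedding) :=
      Inv29.conj (by simpa using h1)
    have h3 := hx _ h2 (by simpa using hsmall) (g⁻¹ i)
      (Finset.mem_map_of_mem _ (hself i))
    rw [Perm.mul_apply, Perm.mul_apply, h3, perm_apply_inv]
  intro i j hi hj
  obtain ⟨h, h1, h2, h3⟩ := (mO _ _).1 (hall i hi)
  obtain ⟨k, k1, k2, k3⟩ := (mO _ _).1 (hall j hj)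
  refine ⟨k * h⁻¹, G.mul_mem k1 (G.inv_mem h1), ?_, ?_⟩
  · rw [Perm.mul_apply, show h⁻¹ q = q by rw [Perm.inv_eq_iff_eq, h2], k2]
  · rw [Perm.mul_apply, ← h3, perm_inv_apply, k3]

/-! ### The criterion up to conjugation -/

lemma exists_invariant (G : Subgroup (Perm (Fin 29))) (hG : ¬ ∀ i j, ∃ g ∈ G, g i = j) :
    ∃ S : Finset (Fin 29), (∀ g ∈ G, Inv29 g S) ∧ 0 < #S ∧ #S < 29 := by
  classical
  push Not at hG
  obtain ⟨i, j, hij⟩ := hG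
  refine ⟨({k | ∃ g ∈ G, g i = k} : Finset (Fin 29)), ?_, ?_, ?_⟩
  · intro g hg k
    simp only [Finset.mem_filter, Finset.mem_univ, true_and]
    constructor
    · rintro ⟨h, hh, e⟩
      exact ⟨g⁻¹ * h, G.mul_mem (G.inv_mem hg) hh, by rw [Perm.mul_apply, e, perm_inv_apply]⟩
    · rintro ⟨h, hh, e⟩
      exact ⟨g * h, G.mul_mem hg hh, by rw [Perm.mul_apply, e]⟩
  · exact Finset.card_pos.2 ⟨i, by simpa using ⟨1, G.one_mem, rfl⟩⟩
  · refine lt_of_lt_of_eq (Finset.card_lt_univ_of_notMem (x := j) ?_) (Fintype.card_fin 29)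
    simpa using hij

/-- The criterion for `Alt(29) ≤ G`, in terms of representatives `x`, `y`, `t` of conjugacy classes
that meet `G`. Cycle lengths are bounded below by counting iterates. -/
lemma alt_le_of_conj (G : Subgroup (Perm (Fin 29))) (hG : ∀ i j, ∃ g ∈ G, g i = j)
    {x y t u v w : Perm (Fin 29)} (m : ℕ) {n : ℕ}
    (hxG : u⁻¹ * x * u ∈ G) (hyG : v⁻¹ * y * v ∈ G) (htG : w⁻¹ * t * w ∈ G)
    (hx1 : x ≠ 1) {p : Fin 29} (hp : x p = p)
    (hx : ∀ i, x i ≠ i → m ≤ #((range m).image fun k => (x ^ k) i))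
    {q r : Fin 29} (hq : y q = q) (hqr : r ≠ q)
    (hy : 28 < #((range n).image fun k => (y ^ k) r) + m)
    (ht1 : t ≠ 1) (ht6 : #t.support ≤ 6) :
    alternatingGroup (Fin 29) ≤ G := by
  have himage : ∀ {g : Perm (Fin 29)} {S : Finset (Fin 29)} (n : ℕ) (i : Fin 29), Inv29 g S →
      i ∈ S → #((range n).image fun k => (g ^ k) i) ≤ #S := by
    intro g S n i hS hi
    refine Finset.card_le_card fun j hj => ?_
    obtain ⟨k, _, rfl⟩ := Finset.mem_image.1 hj
    exact (hS.pow k i).2 hi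
  refine alt_le G hG (v⁻¹ q) (stab_transitive G hG m hxG ?_ (p := u⁻¹ p) ?_ ?_ hyG
    (q := v⁻¹ q) (r := v⁻¹ r) ?_ ?_ ?_) htG ?_ ?_
  · intro e
    exact hx1 (by simpa [mul_assoc, inv_mul_eq_one, mul_eq_right] using e)
  · simp [Perm.mul_apply, hp]
  · intro S hS hSm i hi
    have h1 : x (u i) = u i := by
      by_contra hne
      have h2 := himage m (u i) hS.conj (Finset.mem_map_of_mem _ hi)
      have h3 := hx _ hne
      rw [Finset.card_map] at h2
      omega
    rw [Perm.mul_apply, Perm.mul_apply, h1, perm_inv_apply]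
  · simp [Perm.mul_apply, hq]
  · exact fun e => hqr (v⁻¹.injective e)
  · intro S hS hrS
    have h2 := himage n r hS.conj (by
      have := Finset.mem_map_of_mem v.toEmbedding hrS
      simpa using this)
    rw [Finset.card_map] at h2
    omega
  · intro e
    exact ht1 (by simpa [mul_assoc, inv_mul_eq_one, mul_eq_right] using e)
  · have := Perm.card_support_conj (τ := t) (σ := w⁻¹)
    rw [inv_inv] at this
    rw [this]; exact ht6

/-! ### The three permutations and their invariant sets -/

/-- The element `a`, of cycle type `1, 3, 3, 11, 11`. -/
def permA : Perm (Fin 29) := c[2, 3, 4] * c[5, 6, 7] *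
      c[8, 9, 10, 11, 12, 13, 14, 15, 16, 17, 18] *
      c[19, 20, 21, 22, 23, 24, 25, 26, 27, 28, 29]

/-- The element `b`, of cycle type `2, 2, 25`. -/
def permB : Perm (Fin 29) := c[1, 2] * c[3, 4] *
      c[5, 6, 7, 8, 9, 10, 11, 12, 13, 14, 15, 16, 17, 18, 19, 20, 21, 22, 23,
        24, 25, 26, 27, 28, 29]

/-- The element `c`, of cycle type `2, 6, 21`. -/
def permC : Perm (Fin 29) := c[1, 2] * c[3, 4, 5, 6, 7, 8] *
      c[9, 10, 11, 12, 13, 14, 15, 16, 17, 18, 19, 20, 21, 22, 23, 24, 25, 26,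
        27, 28, 29]

/-- The index of the cycle of `permA` through `i`; the point `29` is `0 : Fin 29`. -/
def cycA (i : Fin 29) : Fin 5 :=
  if i = 0 then 4 else if i ≤ 1 then 0 else if i ≤ 4 then 1 else
  if i ≤ 7 then 2 else if i ≤ 18 then 3 else 4

/-- The index of the cycle of `permB` through `i`; the point `29` is `0 : Fin 29`. -/
def cycB (i : Fin 29) : Fin 3 :=
  if i = 0 then 2 else if i ≤ 2 then 0 else if i ≤ 4 then 1 else 2

/-- The index of the cycle of `permC` through `i`; the point `29` is `0 : Fin 29`. -/
def cycC (i : Fin 29) : Fin 3 :=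
  if i = 0 then 2 else if i ≤ 2 then 0 else if i ≤ 8 then 1 else 2

/-- An invariant set is a union of cycles; `cyc` labels the cycles and `rep` picks a point on each. -/
lemma Inv29.eq_filter {n : ℕ} {g : Perm (Fin 29)} (cyc : Fin 29 → Fin n) (rep : Fin n → Fin 29)
    (h : ∀ i, ∃ k ∈ range 29, (g ^ k) (rep (cyc i)) = i) {S : Finset (Fin 29)} (hS : Inv29 g S) :
    ∃ T : Finset (Fin n), S = ({i | cyc i ∈ T} : Finset (Fin 29)) := by
  refine ⟨({j | rep j ∈ S} : Finset (Fin n)), ?_⟩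
  ext i
  obtain ⟨k, _, hk⟩ := h i
  have := hS.pow k (rep (cyc i))
  rw [hk] at this
  simpa using this

lemma invA {S : Finset (Fin 29)} (hS : Inv29 permA S) :
    ∃ T : Finset (Fin 5), S = ({i | cycA i ∈ T} : Finset (Fin 29)) :=
  hS.eq_filter cycA ![1, 2, 5, 8, 19] (by decide +kernel)

lemma invB {S : Finset (Fin 29)} (hS : Inv29 permB S) :
    ∃ T : Finset (Fin 3), S = ({i | cycB i ∈ T} : Finset (Fin 29)) :=
  hS.eq_filter cycB ![1, 3, 5] (by decide +kernel)

lemma invC {S : Finset (Fin 29)} (hS : Inv29 permC S) :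
    ∃ T : Finset (Fin 3), S = ({i | cycC i ∈ T} : Finset (Fin 29)) :=
  hS.eq_filter cycC ![1, 3, 9] (by decide +kernel)

/-- The size of an invariant set is a sum of distinct terms of the sequence `1, 3, 3, 11, 11`. -/
lemma cardA {x : Perm (Fin 29)} {S : Finset (Fin 29)} (hS : Inv29 (x⁻¹ * permA * x) S) :
    #S ∈ [0, 1, 3, 4, 6, 7, 11, 12, 14, 15, 17, 18, 22, 23, 25, 26, 28, 29] := by
  obtain ⟨T, hT⟩ := invA hS.conj
  rw [← Finset.card_map x.toEmbedding, hT]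
  revert T
  have : ∀ T : Finset (Fin 5), #({i | cycA i ∈ T} : Finset (Fin 29)) ∈
      [0, 1, 3, 4, 6, 7, 11, 12, 14, 15, 17, 18, 22, 23, 25, 26, 28, 29] := by decide +kernel
  exact fun T _ => this T

lemma cardB {x : Perm (Fin 29)} {S : Finset (Fin 29)} (hS : Inv29 (x⁻¹ * permB * x) S) :
    #S ∈ [0, 2, 4, 25, 27, 29] := by
  obtain ⟨T, hT⟩ := invB hS.conj
  rw [← Finset.card_map x.toEmbedding, hT]
  revert T
  have : ∀ T : Finset (Fin 3), #({i | cycB i ∈ T} : Finset (Fin 29)) ∈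
      [0, 2, 4, 25, 27, 29] := by decide +kernel
  exact fun T _ => this T

lemma cardC {x : Perm (Fin 29)} {S : Finset (Fin 29)} (hS : Inv29 (x⁻¹ * permC * x) S) :
    #S ∈ [0, 2, 6, 8, 21, 23, 27, 29] := by
  obtain ⟨T, hT⟩ := invC hS.conj
  rw [← Finset.card_map x.toEmbedding, hT]
  revert T
  have : ∀ T : Finset (Fin 3), #({i | cycC i ∈ T} : Finset (Fin 29)) ∈
      [0, 2, 6, 8, 21, 23, 27, 29] := by decide +kernel
  exact fun T _ => this T

/-- The 4-point invariant sets are the fixed point and a 3-cycle; the 6-point one is the union of the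
two 3-cycles. -/
lemma interA {x : Perm (Fin 29)} {S T : Finset (Fin 29)} (hS : Inv29 (x⁻¹ * permA * x) S)
    (hT : Inv29 (x⁻¹ * permA * x) T) (hS4 : #S = 4) (hT6 : #T = 6) : #(S ∩ T) = 3 := by
  rw [← Finset.card_map x.toEmbedding] at hS4 hT6 ⊢
  rw [Finset.map_inter]
  obtain ⟨U, hU⟩ := invA hS.conj
  obtain ⟨V, hV⟩ := invA hT.conj
  rw [hU] at hS4 ⊢
  rw [hV] at hT6 ⊢
  have : ∀ U V : Finset (Fin 5), #({i | cycA i ∈ U} : Finset (Fin 29)) = 4 →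
      #({i | cycA i ∈ V} : Finset (Fin 29)) = 6 →
      #(({i | cycA i ∈ U} : Finset (Fin 29)) ∩ ({i | cycA i ∈ V} : Finset (Fin 29))) = 3 := by
    decide +kernel
  exact this U V hS4 hT6

lemma interB {x : Perm (Fin 29)} {S T : Finset (Fin 29)} (hS : Inv29 (x⁻¹ * permB * x) S)
    (hT : Inv29 (x⁻¹ * permB * x) T) (hS2 : #S = 2) (hT4 : #T = 4) : S ⊆ T := by
  rw [← Finset.card_map x.toEmbedding] at hS2 hT4
  rw [← Finset.map_subset_map (f := x.toEmbedding)]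
  obtain ⟨U, hU⟩ := invB hS.conj
  obtain ⟨V, hV⟩ := invB hT.conj
  rw [hU] at hS2 ⊢
  rw [hV] at hT4 ⊢
  have : ∀ U V : Finset (Fin 3), #({i | cycB i ∈ U} : Finset (Fin 29)) = 2 →
      #({i | cycB i ∈ V} : Finset (Fin 29)) = 4 →
      ({i | cycB i ∈ U} : Finset (Fin 29)) ⊆ ({i | cycB i ∈ V} : Finset (Fin 29)) := by
    decide +kernel
  exact this U V hS2 hT4

lemma interC {x : Perm (Fin 29)} {S T : Finset (Fin 29)} (hS : Inv29 (x⁻¹ * permC * x) S)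
    (hT : Inv29 (x⁻¹ * permC * x) T) (hS2 : #S = 2) (hT6 : #T = 6) : Disjoint S T := by
  rw [← Finset.card_map x.toEmbedding] at hS2 hT6
  rw [← Finset.disjoint_map x.toEmbedding]
  obtain ⟨U, hU⟩ := invC hS.conj
  obtain ⟨V, hV⟩ := invC hT.conj
  rw [hU] at hS2 ⊢
  rw [hV] at hT6 ⊢
  have : ∀ U V : Finset (Fin 3), #({i | cycC i ∈ U} : Finset (Fin 29)) = 2 →
      #({i | cycC i ∈ V} : Finset (Fin 29)) = 6 →
      Disjoint ({i | cycC i ∈ U} : Finset (Fin 29)) ({i | cycC i ∈ V} : Finset (Fin 29)) := by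
    decide +kernel
  exact this U V hS2 hT6

/-! ### Subgroups containing conjugates of the three permutations -/

lemma conj_pow_mem {G : Subgroup (Perm (Fin 29))} {g x : Perm (Fin 29)}
    (h : x⁻¹ * g * x ∈ G) (n : ℕ) : x⁻¹ * g ^ n * x ∈ G := by
  have := G.pow_mem h n
  have e := conj_pow (i := n) (a := x⁻¹) (b := g)
  rw [inv_inv] at e
  rwa [e] at this

lemma permB_pow_25 : permB ^ 25 = swap 1 2 * swap 3 4 := by
  have e : permB = (swap 1 2 * swap 3 4) * List.formPerm [5, 6, 7, 8, 9, 10, 11, 12, 13, 14, 15,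
      16, 17, 18, 19, 20, 21, 22, 23, 24, 25, 26, 27, 28, 29] := by decide +kernel
  have hc : Commute (swap 1 2 * swap 3 4 : Perm (Fin 29)) (List.formPerm [5, 6, 7, 8, 9, 10, 11,
      12, 13, 14, 15, 16, 17, 18, 19, 20, 21, 22, 23, 24, 25, 26, 27, 28, 29]) := by
    change _ = _
    decide +kernel
  have hl := List.formPerm_pow_length_eq_one_of_nodup (l := ([5, 6, 7, 8, 9, 10, 11, 12, 13, 14,
      15, 16, 17, 18, 19, 20, 21, 22, 23, 24, 25, 26, 27, 28, 29] : List (Fin 29)))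
    (by decide +kernel)
  have hs : (swap 1 2 * swap 3 4 : Perm (Fin 29)) ^ 2 = 1 := by decide +kernel
  simp only [List.length_cons, List.length_nil, Nat.reduceAdd] at hl
  rw [e, hc.mul_pow, hl, mul_one, show 25 = 2 * 12 + 1 from rfl, pow_succ, pow_mul, hs, one_pow,
    one_mul]

lemma alt_le_of_B (G : Subgroup (Perm (Fin 29))) (hG : ∀ i j, ∃ g ∈ G, g i = j)
    {y : Perm (Fin 29)} (hy : y⁻¹ * permB * y ∈ G) : alternatingGroup (Fin 29) ≤ G :=
  alt_le_of_conj G hG 9 (n := 20) (x := permB ^ 2) (y := permB ^ 2) (t := permB ^ 25)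
    (conj_pow_mem hy 2) (conj_pow_mem hy 2) (conj_pow_mem hy 25)
    (p := 1) (q := 1) (r := 5)
    (by decide +kernel) (by decide +kernel) (by decide +kernel) (by decide +kernel)
    (by decide +kernel) (by decide +kernel) (by rw [permB_pow_25]; decide +kernel)
    (by rw [permB_pow_25]; decide +kernel)

lemma alt_le_of_A_C (G : Subgroup (Perm (Fin 29))) (hG : ∀ i j, ∃ g ∈ G, g i = j)
    {x z : Perm (Fin 29)} (hx : x⁻¹ * permA * x ∈ G) (hz : z⁻¹ * permC * z ∈ G) :
    alternatingGroup (Fin 29) ≤ G :=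
  alt_le_of_conj G hG 8 (n := 21) (x := permA ^ 3) (y := permC ^ 2) (t := permA ^ 11)
    (conj_pow_mem hx 3) (conj_pow_mem hz 2) (conj_pow_mem hx 11)
    (p := 1) (q := 1) (r := 9)
    (by decide +kernel) (by decide +kernel) (by decide +kernel) (by decide +kernel)
    (by decide +kernel) (by decide +kernel) (by decide +kernel) (by decide +kernel)

/-- The only sizes of proper nonempty sets invariant under conjugates of both `a` and `b` are `4` and
`25 = 29 - 4`. -/
lemma exists_inv_AB {G : Subgroup (Perm (Fin 29))} {x y : Perm (Fin 29)}
    (hx : x⁻¹ * permA * x ∈ G) (hy : y⁻¹ * permB * y ∈ G)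
    (hG : ¬ alternatingGroup (Fin 29) ≤ G) :
    ∃ S : Finset (Fin 29), #S = 4 ∧ ∀ g ∈ G, Inv29 g S := by
  obtain ⟨S, hS, h0, h29⟩ := exists_invariant G fun h => hG (alt_le_of_B G h hy)
  have h1 := cardA (hS _ hx)
  have h2 := cardB (hS _ hy)
  simp only [List.mem_cons, List.not_mem_nil, or_false] at h1 h2
  have : #S = 4 ∨ #S = 25 := by omega
  rcases this with h | h
  · exact ⟨S, h, hS⟩
  · exact ⟨Sᶜ, by rw [Finset.card_compl, h]; rfl, fun g hg => (hS g hg).compl⟩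

lemma exists_inv_AC {G : Subgroup (Perm (Fin 29))} {x z : Perm (Fin 29)}
    (hx : x⁻¹ * permA * x ∈ G) (hz : z⁻¹ * permC * z ∈ G)
    (hG : ¬ alternatingGroup (Fin 29) ≤ G) :
    ∃ S : Finset (Fin 29), #S = 6 ∧ ∀ g ∈ G, Inv29 g S := by
  obtain ⟨S, hS, h0, h29⟩ := exists_invariant G fun h => hG (alt_le_of_A_C G h hx hz)
  have h1 := cardA (hS _ hx)
  have h2 := cardC (hS _ hz)
  simp only [List.mem_cons, List.not_mem_nil, or_false] at h1 h2
  have : #S = 6 ∨ #S = 23 := by omega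
  rcases this with h | h
  · exact ⟨S, h, hS⟩
  · exact ⟨Sᶜ, by rw [Finset.card_compl, h]; rfl, fun g hg => (hS g hg).compl⟩

lemma exists_inv_BC {G : Subgroup (Perm (Fin 29))} {y z : Perm (Fin 29)}
    (hy : y⁻¹ * permB * y ∈ G) (hz : z⁻¹ * permC * z ∈ G)
    (hG : ¬ alternatingGroup (Fin 29) ≤ G) :
    ∃ S : Finset (Fin 29), #S = 2 ∧ ∀ g ∈ G, Inv29 g S := by
  obtain ⟨S, hS, h0, h29⟩ := exists_invariant G fun h => hG (alt_le_of_B G h hy)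
  have h1 := cardB (hS _ hy)
  have h2 := cardC (hS _ hz)
  simp only [List.mem_cons, List.not_mem_nil, or_false] at h1 h2
  have : #S = 2 ∨ #S = 27 := by omega
  rcases this with h | h
  · exact ⟨S, h, hS⟩
  · exact ⟨Sᶜ, by rw [Finset.card_compl, h]; rfl, fun g hg => (hS g hg).compl⟩

lemma alt_le_of_A_B_C {G : Subgroup (Perm (Fin 29))} {x y z : Perm (Fin 29)}
    (hx : x⁻¹ * permA * x ∈ G) (hy : y⁻¹ * permB * y ∈ G) (hz : z⁻¹ * permC * z ∈ G) :
    alternatingGroup (Fin 29) ≤ G := by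
  by_contra hG
  obtain ⟨S, hS4, hS⟩ := exists_inv_AB hx hy hG
  have := cardC (hS _ hz)
  simp [hS4] at this

/-- For any conjugates of `a`, `b`, `c`, two of them already generate a group containing `Alt(29)`. -/
lemma some_pair_generates (x y z : Perm (Fin 29)) :
    alternatingGroup (Fin 29) ≤ Subgroup.closure {x⁻¹ * permA * x, y⁻¹ * permB * y} ∨
    alternatingGroup (Fin 29) ≤ Subgroup.closure {x⁻¹ * permA * x, z⁻¹ * permC * z} ∨
    alternatingGroup (Fin 29) ≤ Subgroup.closure {y⁻¹ * permB * y, z⁻¹ * permC * z} := by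
  have m1 : ∀ g h : Perm (Fin 29), g ∈ Subgroup.closure {g, h} :=
    fun g h => Subgroup.subset_closure (by simp)
  have m2 : ∀ g h : Perm (Fin 29), h ∈ Subgroup.closure {g, h} :=
    fun g h => Subgroup.subset_closure (by simp)
  by_contra! ⟨hAB, hAC, hBC⟩
  obtain ⟨S4, h4, hS4⟩ := exists_inv_AB (m1 _ _) (m2 _ _) hAB
  obtain ⟨S6, h6, hS6⟩ := exists_inv_AC (m1 _ _) (m2 _ _) hAC
  obtain ⟨S2, h2, hS2⟩ := exists_inv_BC (m1 _ _) (m2 _ _) hBC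
  have hA := interA (hS4 _ (m1 _ _)) (hS6 _ (m1 _ _)) h4 h6
  have hB := interB (hS2 _ (m1 _ _)) (hS4 _ (m2 _ _)) h2 h4
  have hC := interC (hS2 _ (m2 _ _)) (hS6 _ (m2 _ _)) h2 h6
  have hle : S4 ∩ S6 ⊆ S4 \ S2 := by
    intro i hi
    rw [Finset.mem_inter] at hi
    rw [Finset.mem_sdiff]
    exact ⟨hi.1, fun h => Finset.disjoint_left.1 hC h hi.2⟩
  have := Finset.card_le_card hle
  rw [Finset.card_sdiff_of_subset hB] at this
  omega

/-! ### Minimality -/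

/-- `Alt(29)` is transitive, so conjugates with a common proper nonempty invariant set do not
generate it. -/
lemma not_invGenIn {T : Set (Perm (Fin 29))} (σ : Perm (Fin 29) → Perm (Fin 29))
    (hσ : ∀ g, σ g ∈ alternatingGroup (Fin 29)) (S : Finset (Fin 29))
    (hS : ∀ g ∈ T, Inv29 ((σ g)⁻¹ * g * σ g) S) {p q : Fin 29} (hp : p ∈ S) (hq : q ∉ S) :
    ¬ InvGenIn (alternatingGroup (Fin 29)) T := by
  intro h
  have := alternatingGroup.isPretransitive_of_three_le_card (Fin 29) (by simp)
  obtain ⟨g, hg⟩ := MulAction.exists_smul_eq (alternatingGroup (Fin 29)) p q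
  have hmem : (g : Perm (Fin 29)) ∈ Subgroup.closure ((fun g => (σ g)⁻¹ * g * σ g) '' T) := by
    rw [h σ hσ]; exact g.2
  have hinv : Inv29 (g : Perm (Fin 29)) S := Inv29.closure (by
    rintro _ ⟨k, hk, rfl⟩; exact hS k hk) hmem
  exact hq (hg ▸ (hinv p).2 hp)

lemma sign_formPerm_of_odd (l : List (Fin 29)) (hl : l.Nodup) (hodd : Odd l.length) :
    Perm.sign l.formPerm = 1 := by
  have h := congrArg Perm.sign (List.formPerm_pow_length_eq_one_of_nodup l hl)
  rw [map_pow, map_one] at h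
  rcases Int.units_eq_one_or (Perm.sign l.formPerm) with h1 | h1
  · exact h1
  · rw [h1, hodd.neg_one_pow] at h
    exact absurd h (by decide)

lemma permA_mem : permA ∈ alternatingGroup (Fin 29) := by
  rw [Perm.mem_alternatingGroup]
  change Perm.sign (List.formPerm [2, 3, 4] * List.formPerm [5, 6, 7] *
    List.formPerm [8, 9, 10, 11, 12, 13, 14, 15, 16, 17, 18] *
    List.formPerm [19, 20, 21, 22, 23, 24, 25, 26, 27, 28, 29]) = 1
  rw [Perm.sign_mul, Perm.sign_mul, Perm.sign_mul]
  repeat rw [sign_formPerm_of_odd _ (by decide +kernel) (by decide +kernel)]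
  rfl

lemma permB_mem : permB ∈ alternatingGroup (Fin 29) := by
  rw [Perm.mem_alternatingGroup]
  change Perm.sign (swap 1 2 * swap 3 4 * List.formPerm [5, 6, 7, 8, 9, 10, 11, 12, 13, 14, 15,
    16, 17, 18, 19, 20, 21, 22, 23, 24, 25, 26, 27, 28, 29]) = 1
  rw [Perm.sign_mul, Perm.sign_mul, Perm.sign_swap (by decide), Perm.sign_swap (by decide),
    sign_formPerm_of_odd _ (by decide +kernel) (by decide +kernel)]
  rfl

lemma permC_mem : permC ∈ alternatingGroup (Fin 29) := by
  rw [Perm.mem_alternatingGroup]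
  change Perm.sign (swap 1 2 * (swap 3 4 * List.formPerm [4, 5, 6, 7, 8]) *
    List.formPerm [9, 10, 11, 12, 13, 14, 15, 16, 17, 18, 19, 20, 21, 22, 23, 24, 25, 26, 27, 28,
      29]) = 1
  rw [Perm.sign_mul, Perm.sign_mul, Perm.sign_mul, Perm.sign_swap (by decide),
    Perm.sign_swap (by decide), sign_formPerm_of_odd _ (by decide +kernel) (by decide +kernel),
    sign_formPerm_of_odd _ (by decide +kernel) (by decide +kernel)]
  rfl

lemma conj_mem {g x : Perm (Fin 29)} (hg : g ∈ alternatingGroup (Fin 29)) :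
    x⁻¹ * g * x ∈ alternatingGroup (Fin 29) := by
  have := (inferInstance : (alternatingGroup (Fin 29)).Normal).conj_mem g hg x⁻¹
  rwa [inv_inv] at this

/-- Elements distinguished by whether their `n`-th power is trivial are not conjugate. -/
lemma conj_ne {g h x y : Perm (Fin 29)} (n : ℕ) (hg : g ^ n = 1) (hh : h ^ n ≠ 1) :
    x⁻¹ * g * x ≠ y⁻¹ * h * y := by
  intro e
  have e1 := conj_pow (i := n) (a := x⁻¹) (b := g)
  have e2 := conj_pow (i := n) (a := y⁻¹) (b := h)
  rw [inv_inv] at e1 e2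
  rw [e, e2, hg] at e1
  apply hh
  have e3 : y⁻¹ * h ^ n * y = 1 := by rw [e1]; group
  rw [show h ^ n = y * (y⁻¹ * h ^ n * y) * y⁻¹ by group, e3]
  group

lemma minInvGen : MinInvGenIn (alternatingGroup (Fin 29)) {permA, permB, permC} := by
  refine ⟨fun σ _ => le_antisymm ?_ ?_, fun T hT => ?_⟩
  · rw [Subgroup.closure_le]
    rintro _ ⟨g, hg, rfl⟩
    rcases hg with rfl | rfl | rfl
    exacts [conj_mem permA_mem, conj_mem permB_mem, conj_mem permC_mem]
  · exact alt_le_of_A_B_C (x := σ permA) (y := σ permB) (z := σ permC)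
      (Subgroup.subset_closure ⟨permA, by simp, rfl⟩)
      (Subgroup.subset_closure ⟨permB, by simp, rfl⟩)
      (Subgroup.subset_closure ⟨permC, by simp, rfl⟩)
  · obtain ⟨hsub, hne⟩ := hT
    rw [Set.not_subset] at hne
    obtain ⟨g, hg, hgT⟩ := hne
    have hcases : ∀ k ∈ T, k ≠ g ∧ (k = permA ∨ k = permB ∨ k = permC) :=
      fun k hk => ⟨fun e => hgT (e ▸ hk), hsub hk⟩
    have hcases' : (∀ k ∈ T, k = permB ∨ k = permC) ∨ (∀ k ∈ T, k = permA ∨ k = permC) ∨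
        (∀ k ∈ T, k = permA ∨ k = permB) := by
      rcases hg with rfl | rfl | rfl
      · exact Or.inl fun k hk => (hcases k hk).2.resolve_left (hcases k hk).1
      · refine Or.inr (Or.inl fun k hk => (hcases k hk).2.imp_right fun h => ?_)
        exact h.resolve_left (hcases k hk).1
      · refine Or.inr (Or.inr fun k hk => ?_)
        rcases (hcases k hk).2 with h | h | h
        exacts [Or.inl h, Or.inr h, absurd h (hcases k hk).1]
    rcases hcases' with h | h | h
    -- `b` and `c` preserve `{1, 2}`.
    · refine not_invGenIn (fun _ => 1) (fun _ => Subgroup.one_mem _) {1, 2} ?_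
        (p := 1) (q := 3) (by decide) (by decide)
      intro k hk
      rcases h k hk with rfl | rfl
      · unfold Inv29; decide +kernel
      · unfold Inv29; decide +kernel
    -- `a` preserves `{2, …, 7}`, and `(2 8)(9 10)` carries the 6-cycle of `c` to this set.
    · refine not_invGenIn (fun k => if k = permC then swap 2 8 * swap 9 10 else 1) (fun k => ?_)
        {2, 3, 4, 5, 6, 7} ?_ (p := 2) (q := 1) (by decide) (by decide)
      · split_ifs
        · rw [Perm.mem_alternatingGroup]; decide +kernel
        · exact Subgroup.one_mem _
      intro k hk
      rcases h k hk with rfl | rfl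
      · rw [if_neg (by decide +kernel)]
        unfold Inv29; decide +kernel
      · rw [if_pos rfl]
        unfold Inv29; decide +kernel
    -- `a` and `b` preserve `{1, 2, 3, 4}`.
    · refine not_invGenIn (fun _ => 1) (fun _ => Subgroup.one_mem _) {1, 2, 3, 4} ?_
        (p := 1) (q := 5) (by decide) (by decide)
      intro k hk
      rcases h k hk with rfl | rfl
      · unfold Inv29; decide +kernel
      · unfold Inv29; decide +kernel

lemma not_minGen (x y z : Perm (Fin 29)) : ¬ MinGenIn (alternatingGroup (Fin 29))
    {x⁻¹ * permA * x, y⁻¹ * permB * y, z⁻¹ * permC * z} := by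
  rintro ⟨hgen, hmin⟩
  have hAB : x⁻¹ * permA * x ≠ y⁻¹ * permB * y :=
    conj_ne 33 (by decide +kernel) (by decide +kernel)
  have hAC : x⁻¹ * permA * x ≠ z⁻¹ * permC * z :=
    conj_ne 33 (by decide +kernel) (by decide +kernel)
  have hBC : y⁻¹ * permB * y ≠ z⁻¹ * permC * z := by
    -- Conjugates of `b` have an invariant set of size 4, conjugates of `c` do not.
    intro e
    have h : Inv29 permB {1, 2, 3, 4} := by unfold Inv29; decide +kernel
    have h' : Inv29 (y⁻¹ * permB * y) (({1, 2, 3, 4} : Finset (Fin 29)).map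
        (y⁻¹ : Perm (Fin 29)).toEmbedding) :=
      Inv29.conj (by rwa [show (y⁻¹)⁻¹ * (y⁻¹ * permB * y) * y⁻¹ = permB by group])
    rw [e] at h'
    have := cardC h'
    rw [Finset.card_map] at this
    exact absurd this (by decide)
  have hpair : ∀ T : Set (Perm (Fin 29)),
      T ⊂ {x⁻¹ * permA * x, y⁻¹ * permB * y, z⁻¹ * permC * z} →
      ¬ alternatingGroup (Fin 29) ≤ Subgroup.closure T := fun T hT hle =>
    hmin T hT (le_antisymm (hgen ▸ Subgroup.closure_mono hT.1) hle)
  rcases some_pair_generates x y z with h | h | h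
  · refine hpair _ ⟨?_, fun hsub => ?_⟩ h
    · rintro k (rfl | rfl) <;> simp
    · have := @hsub (z⁻¹ * permC * z) (by simp)
      rcases this with e | e
      exacts [hAC e.symm, hBC e.symm]
  · refine hpair _ ⟨?_, fun hsub => ?_⟩ h
    · rintro k (rfl | rfl) <;> simp
    · have := @hsub (y⁻¹ * permB * y) (by simp)
      rcases this with e | e
      exacts [hAB e.symm, hBC e]
  · refine hpair _ ⟨?_, fun hsub => ?_⟩ h
    · rintro k (rfl | rfl) <;> simp
    · have := @hsub (x⁻¹ * permA * x) (by simp)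
      rcases this with e | e
      exacts [hAB e, hAC e]

end Alt29

open Equiv in
/-- In `G = Alt(29)` (even permutations of a 29-element set, here
`Fin 29` with the point "29" of the paper rendered as `(29 : Fin 29) = 0`), the
displayed elements `a`, `b`, `c` form a minimal invariable generating set of `G`,
yet no choice of conjugates `x⁻¹ax, y⁻¹by, z⁻¹cz` (with `x, y, z ∈ G`) is a
minimal generating set of `G`. -/
theorem stmt6 (a b c : Equiv.Perm (Fin 29))
    (ha : a = c[2, 3, 4] * c[5, 6, 7] *
      c[8, 9, 10, 11, 12, 13, 14, 15, 16, 17, 18] *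
      c[19, 20, 21, 22, 23, 24, 25, 26, 27, 28, 29])
    (hb : b = c[1, 2] * c[3, 4] *
      c[5, 6, 7, 8, 9, 10, 11, 12, 13, 14, 15, 16, 17, 18, 19, 20, 21, 22, 23,
        24, 25, 26, 27, 28, 29])
    (hc : c = c[1, 2] * c[3, 4, 5, 6, 7, 8] *
      c[9, 10, 11, 12, 13, 14, 15, 16, 17, 18, 19, 20, 21, 22, 23, 24, 25, 26,
        27, 28, 29]) :
    MinInvGenIn (alternatingGroup (Fin 29)) {a, b, c} ∧
      ∀ x y z : Equiv.Perm (Fin 29),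
        x ∈ alternatingGroup (Fin 29) → y ∈ alternatingGroup (Fin 29) →
        z ∈ alternatingGroup (Fin 29) →
        ¬ MinGenIn (alternatingGroup (Fin 29))
            {x⁻¹ * a * x, y⁻¹ * b * y, z⁻¹ * c * z} := by
  subst ha hb hc
  exact ⟨Alt29.minInvGen, fun x y z _ _ _ => Alt29.not_minGen x y z⟩
end

section
/- For every pair of finite groups A and B, m_I(A) + m_I(B) ≤ m_I(A × B). -/
namespace InvGen

variable {G H : Type*} [Group G] [Group H]

lemma mono {S T : Set G} (h : InvGen S) (hST : S ⊆ T) : InvGen T := fun σ =>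
  top_le_iff.1 ((h σ).ge.trans (Subgroup.closure_mono (Set.image_mono hST)))

lemma diff_one {S : Set G} (h : InvGen S) : InvGen (S \ {1}) := by
  intro σ
  rw [eq_top_iff, ← h σ, Subgroup.closure_le]
  rintro _ ⟨g, hg, rfl⟩
  by_cases h1 : g = 1
  · subst h1
    simp [one_mem]
  · exact Subgroup.subset_closure ⟨g, ⟨hg, h1⟩, rfl⟩

lemma image {S : Set G} (h : InvGen S) (f : G →* H) (hf : Function.Surjective f) :
    InvGen (f '' S) := by
  intro σ
  obtain ⟨r, hr⟩ := hf.hasRightInverse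
  have h1 := congrArg (Subgroup.map f) (h fun g => r (σ (f g)))
  rw [MonoidHom.map_closure, Subgroup.map_top_of_surjective f hf] at h1
  rw [← h1, Set.image_image, Set.image_image]
  congr 1
  refine Set.image_congr fun g _ => ?_
  simp [hr (σ (f g))]

/-- Jordan's theorem: a subgroup of a finite group meeting every conjugacy class is everything. -/
lemma univ [Finite G] : InvGen (Set.univ : Set G) := by
  classical
  intro σ
  set K := Subgroup.closure ((fun g => (σ g)⁻¹ * g * σ g) '' (Set.univ : Set G)) with hK
  cases nonempty_fintype G
  have hfix : ∀ g : G, 1 ≤ Fintype.card (MulAction.fixedBy (G ⧸ K) g) := by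
    intro g
    -- `g` fixes the coset `σ g K`, since `(σ g)⁻¹ g (σ g) ∈ K`.
    refine Fintype.card_pos_iff.2 ⟨⟨((σ g : G) : G ⧸ K), ?_⟩⟩
    change ((g * σ g : G) : G ⧸ K) = (σ g : G)
    refine (QuotientGroup.eq.2 ?_).symm
    rw [← mul_assoc]
    exact Subgroup.subset_closure ⟨g, trivial, rfl⟩
  have hB := MulAction.sum_card_fixedBy_eq_card_orbits_mul_card_group G (G ⧸ K)
  have horb : Fintype.card (Quotient (MulAction.orbitRel G (G ⧸ K))) = 1 :=
    Fintype.card_eq_one_iff_nonempty_unique.2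
      ((MulAction.pretransitive_iff_unique_quotient_of_nonempty G (G ⧸ K)).1 inferInstance)
  rw [horb, one_mul] at hB
  -- The fixed-point counts are at least `1` with average `1`, so all equal `1`; at the identity
  -- this says that the index of `K` is `1`.
  have hall : ∀ g ∈ Finset.univ, 1 = Fintype.card (MulAction.fixedBy (G ⧸ K) g) :=
    (Finset.sum_eq_sum_iff_of_le fun g _ => hfix g).1 (by simpa using hB.symm)
  have h1 := hall 1 (Finset.mem_univ _)
  rw [← Nat.card_eq_fintype_card, MulAction.fixedBy_one_eq_univ, Nat.card_univ] at h1
  exact Subgroup.index_eq_one.1 h1.symm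

end InvGen

lemma MinInvGen.one_notMem {G : Type*} [Group G] {S : Set G} (h : MinInvGen S) : (1 : G) ∉ S :=
  fun h1 => h.2 _ (Set.sdiff_singleton_ssubset.2 h1) h.1.diff_one

lemma exists_minInvGen_ncard_eq (G : Type*) [Group G] [Finite G] :
    ∃ S : Set G, MinInvGen S ∧ S.ncard = mInv G := by
  obtain ⟨S, hS⟩ := (Set.toFinite {S : Set G | InvGen S}).exists_minimal ⟨_, InvGen.univ⟩
  refine Nat.sSup_mem (s := {n : ℕ | ∃ S : Set G, MinInvGen S ∧ S.ncard = n})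
    ⟨_, S, ⟨hS.1, fun T hT h => hT.2 (hS.2 h hT.1)⟩, rfl⟩ ⟨Nat.card G, ?_⟩
  rintro _ ⟨T, -, rfl⟩
  exact Set.ncard_le_card T

lemma MinInvGen.ncard_le_mInv {G : Type*} [Group G] [Finite G] {S : Set G} (h : MinInvGen S) :
    S.ncard ≤ mInv G := by
  refine le_csSup ⟨Nat.card G, ?_⟩ ⟨S, h, rfl⟩
  rintro _ ⟨T, -, rfl⟩
  exact Set.ncard_le_card T

lemma InvGen.prod {A B : Type*} [Group A] [Group B] {S : Set A} {T : Set B}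
    (hS : InvGen S) (hT : InvGen T) :
    InvGen (MonoidHom.inl A B '' S ∪ MonoidHom.inr A B '' T) := by
  intro σ
  rw [eq_top_iff]
  have hA := congrArg (Subgroup.map (MonoidHom.inl A B)) (hS fun a => (σ (a, 1)).1)
  have hB := congrArg (Subgroup.map (MonoidHom.inr A B)) (hT fun b => (σ (1, b)).2)
  rw [MonoidHom.map_closure] at hA hB
  set K := Subgroup.closure ((fun g => (σ g)⁻¹ * g * σ g) ''
    (MonoidHom.inl A B '' S ∪ MonoidHom.inr A B '' T)) with hK
  have hA' : Subgroup.map (MonoidHom.inl A B) ⊤ ≤ K := by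
    rw [← hA, Subgroup.closure_le]
    rintro _ ⟨_, ⟨a, ha, rfl⟩, rfl⟩
    exact Subgroup.subset_closure ⟨(a, 1), Or.inl ⟨a, ha, rfl⟩, by ext <;> simp⟩
  have hB' : Subgroup.map (MonoidHom.inr A B) ⊤ ≤ K := by
    rw [← hB, Subgroup.closure_le]
    rintro _ ⟨_, ⟨b, hb, rfl⟩, rfl⟩
    exact Subgroup.subset_closure ⟨(1, b), Or.inr ⟨b, hb, rfl⟩, by ext <;> simp⟩
  rintro ⟨a, b⟩ -
  have := K.mul_mem (hA' ⟨a, trivial, rfl⟩) (hB' ⟨b, trivial, rfl⟩)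
  simpa using this

lemma MinInvGen.prod {A B : Type*} [Group A] [Group B] {S : Set A} {T : Set B}
    (hS : MinInvGen S) (hT : MinInvGen T) :
    MinInvGen (MonoidHom.inl A B '' S ∪ MonoidHom.inr A B '' T) := by
  refine ⟨hS.1.prod hT.1, fun V hV h => ?_⟩
  obtain ⟨x, hx, hxV⟩ := Set.exists_of_ssubset hV
  rcases hx with ⟨s, hs, rfl⟩ | ⟨t, ht, rfl⟩
  · refine hS.2 _ (Set.sdiff_singleton_ssubset.2 hs)
      ((h.image (MonoidHom.fst A B) Prod.fst_surjective).diff_one.mono ?_)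
    rintro _ ⟨⟨v, hv, rfl⟩, h1⟩
    rcases hV.1 hv with ⟨a, ha, rfl⟩ | ⟨b, hb, rfl⟩
    · refine ⟨ha, ?_⟩
      rintro rfl
      exact hxV hv
    · exact absurd rfl h1
  · refine hT.2 _ (Set.sdiff_singleton_ssubset.2 ht)
      ((h.image (MonoidHom.snd A B) Prod.snd_surjective).diff_one.mono ?_)
    rintro _ ⟨⟨v, hv, rfl⟩, h1⟩
    rcases hV.1 hv with ⟨a, ha, rfl⟩ | ⟨b, hb, rfl⟩
    · exact absurd rfl h1
    · refine ⟨hb, ?_⟩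
      rintro rfl
      exact hxV hv

/-- For finite groups `A` and `B`, `m_I(A) + m_I(B) ≤ m_I(A × B)`. -/
theorem stmt8 (A B : Type*) [Group A] [Finite A] [Group B] [Finite B] :
    mInv A + mInv B ≤ mInv (A × B) := by
  obtain ⟨S, hS, hSc⟩ := exists_minInvGen_ncard_eq A
  obtain ⟨T, hT, hTc⟩ := exists_minInvGen_ncard_eq B
  have hdisj : Disjoint (MonoidHom.inl A B '' S) (MonoidHom.inr A B '' T) := by
    rw [Set.disjoint_left]
    rintro _ ⟨a, ha, rfl⟩ ⟨b, -, hb⟩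
    have h1 : 1 = a := congrArg Prod.fst hb
    exact hS.one_notMem (h1 ▸ ha)
  rw [← hSc, ← hTc, ← Set.ncard_image_of_injective S (f := MonoidHom.inl A B)
    (fun _ _ h => congrArg Prod.fst h), ← Set.ncard_image_of_injective T (f := MonoidHom.inr A B)
    (fun _ _ h => congrArg Prod.snd h), ← Set.ncard_union_eq hdisj]
  exact (hS.prod hT).ncard_le_mInv
end

section
/- For every finite group G, m_I(G) ≤ ι(G). -/
/-- `M*`: the set of conjugacy classes of `G` meeting the subgroup `M`. -/
def starSet {G : Type*} [Group G] (M : Subgroup G) : Set (ConjClasses G) :=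
  {c | ∃ x ∈ M, ConjClasses.mk x = c}

/-- `ℳ(G) = {M* : M a maximal subgroup of G}`. -/
def maxStarFamily (G : Type*) [Group G] : Set (Set (ConjClasses G)) :=
  {X | ∃ M : Subgroup G, IsCoatom M ∧ X = starSet M}

/-- A family `S` of members of `ℳ(G)` is independent if for every `X ∈ S`, the
intersection of the members of `S \ {X}` properly contains the intersection of all
the members of `S`. -/
def IndepFamily {G : Type*} [Group G] (S : Set (Set (ConjClasses G))) : Prop :=
  ∀ X ∈ S, ⋂₀ S ⊂ ⋂₀ (S \ {X})

/-- `ι(G)`: the largest cardinality of an independent subset of `ℳ(G)`. -/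
noncomputable def iotaInv (G : Type*) [Group G] : ℕ :=
  sSup {n : ℕ | ∃ S : Set (Set (ConjClasses G)),
    S ⊆ maxStarFamily G ∧ IndepFamily S ∧ S.ncard = n}

/-- Invariable generation in terms of maximal subgroups: an element conjugates into `M` if and only
if its class lies in `M*`, and a proper subgroup of a finite group lies in a maximal one. -/
lemma invGen_iff {G : Type*} [Group G] [Finite G] (S : Set G) :
    InvGen S ↔ ∀ M : Subgroup G, IsCoatom M → ∃ s ∈ S, ConjClasses.mk s ∉ starSet M := by
  constructor
  · intro h M hM
    by_contra! hS
    have hσ : ∀ s, ∃ g : G, s ∈ S → g⁻¹ * s * g ∈ M := by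
      intro s
      by_cases hs : s ∈ S
      · obtain ⟨x, hx, hxs⟩ := hS s hs
        obtain ⟨c, hc⟩ := isConj_iff.1 (ConjClasses.mk_eq_mk_iff_isConj.1 hxs)
        refine ⟨c, fun _ => ?_⟩
        rw [← hc]
        simpa [mul_assoc] using hx
      · exact ⟨1, fun h => absurd h hs⟩
    choose σ hσ using hσ
    refine hM.1 (top_unique ?_)
    rw [← h σ, Subgroup.closure_le]
    rintro _ ⟨s, hs, rfl⟩
    exact hσ s hs
  · intro h σ
    by_contra hne
    obtain ⟨M, hM, hle⟩ := (eq_top_or_exists_le_coatom _).resolve_left hne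
    obtain ⟨s, hs, hsM⟩ := h M hM
    refine hsM ⟨_, hle (Subgroup.subset_closure ⟨s, hs, rfl⟩), ?_⟩
    rw [ConjClasses.mk_eq_mk_iff_isConj, isConj_iff]
    exact ⟨σ s, by group⟩

/-- For every finite group `G`, `m_I(G) ≤ ι(G)`. -/
theorem stmt10 (G : Type*) [Group G] [Finite G] :
    mInv G ≤ iotaInv G := by
  refine csSup_le' ?_
  rintro n ⟨S, ⟨hS, hmin⟩, rfl⟩
  have hex : ∀ s : G, ∃ M : Subgroup G, s ∈ S → IsCoatom M ∧
      ∀ t ∈ S, ConjClasses.mk t ∈ starSet M ↔ t ≠ s := by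
    intro s
    by_cases hs : s ∈ S
    · have hnot := hmin (S \ {s}) (Set.sdiff_singleton_ssubset.2 hs)
      rw [invGen_iff] at hnot
      push Not at hnot
      obtain ⟨M, hM, hMS⟩ := hnot
      obtain ⟨u, hu, huM⟩ := (invGen_iff S).1 hS M hM
      have hus : u = s := by
        by_contra hne
        exact huM (hMS u ⟨hu, hne⟩)
      subst hus
      exact ⟨M, fun _ => ⟨hM, fun t ht =>
        ⟨fun htM htu => huM (htu ▸ htM), fun hne => hMS t ⟨ht, hne⟩⟩⟩⟩
    · exact ⟨⊥, fun h => absurd h hs⟩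
  choose M hM using hex
  have hinj : Set.InjOn (fun s => starSet (M s)) S := by
    intro s hs t ht hst
    by_contra hne
    have hmem := ((hM t ht).2 s hs).2 hne
    rw [← show starSet (M s) = starSet (M t) from hst] at hmem
    exact ((hM s hs).2 s hs).1 hmem rfl
  refine le_csSup ⟨Nat.card (Set (ConjClasses G)), ?_⟩
    ⟨(fun s => starSet (M s)) '' S, ?_, ?_, hinj.ncard_image⟩
  · rintro _ ⟨F, -, -, rfl⟩
    exact Set.ncard_le_card F
  · rintro _ ⟨s, hs, rfl⟩
    exact ⟨M s, (hM s hs).1, rfl⟩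
  · rintro _ ⟨s, hs, rfl⟩
    refine ⟨Set.sInter_subset_sInter Set.sdiff_subset, fun hsub => ?_⟩
    -- The class of `s` lies in every member of the family except `(M s)*`.
    have hmem : ConjClasses.mk s ∈
        ⋂₀ ((fun s => starSet (M s)) '' S \ {starSet (M s)}) := by
      rintro _ ⟨⟨t, ht, rfl⟩, hne⟩
      refine ((hM t ht).2 s hs).2 ?_
      rintro rfl
      exact hne rfl
    exact ((hM s hs).2 s hs).1 (hsub hmem _ ⟨s, hs, rfl⟩) rfl
end

section
/- For every positive integer n, m_I(Alt(5)^n) = 2n, where Alt(5)^n denotes the direct product of n copies of the alternating group on 5 points. -/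
open Equiv Equiv.Perm

/-! ### Conjugacy classes of `Alt(5)` -/

/-- The alternating group on five points. -/
abbrev A5 : Type := alternatingGroup (Fin 5)

instance : IsSimpleGroup A5 := alternatingGroup.isSimpleGroup (by simp)

/-- A double transposition; like `a3` it fixes the point `0`. -/
def a2 : A5 := ⟨swap 1 4 * swap 2 3, mem_alternatingGroup.2 (by decide)⟩

/-- A 3-cycle. -/
def a3 : A5 := ⟨swap 1 2 * swap 2 3, mem_alternatingGroup.2 (by decide)⟩

/-- A 5-cycle, inverted by `a2`. -/
def a5 : A5 := ⟨finRotate 5, mem_alternatingGroup.2 (by decide)⟩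

/-- The outer automorphism of `Alt(5)` given by conjugation with a transposition. -/
def tau : A5 ≃* A5 := MulAut.conjNormal (swap (0 : Fin 5) 1)

theorem tau_coe (x : A5) : (tau x : Perm (Fin 5)) = swap 0 1 * (x : Perm (Fin 5)) * swap 0 1 := by
  simp [tau]

theorem tau_tau (x : A5) : tau (tau x) = x := by
  ext1
  rw [tau_coe, tau_coe]
  simp [← mul_assoc]

theorem isConj_tau {x y : A5} (h : IsConj x y) : IsConj (tau x) (tau y) :=
  tau.toMonoidHom.map_isConj h

theorem isConj_of_even {x y : A5} {g : Perm (Fin 5)} (hg : sign g = 1)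
    (h : g * (x : Perm (Fin 5)) * g⁻¹ = y) : IsConj x y :=
  isConj_iff.2 ⟨⟨g, hg⟩, Subtype.ext h⟩

theorem isConj_of_odd {x y : A5} {g : Perm (Fin 5)} (hg : sign g = -1)
    (h : g * (x : Perm (Fin 5)) * g⁻¹ = y) : IsConj (tau x) y := by
  refine isConj_of_even (g := g * swap 0 1) (by simp [hg]) ?_
  rw [tau_coe, ← h]
  simp [mul_assoc]

/-- Elements of `Alt(5)` that are conjugate in `Sym(5)` are conjugate in `Alt(5)` up to `tau`. -/
theorem isConj_or_of_perm {x y : A5} (h : IsConj (x : Perm (Fin 5)) y) :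
    IsConj x y ∨ IsConj (tau x) y := by
  obtain ⟨g, hg⟩ := isConj_iff.1 h
  rcases Int.units_eq_one_or (sign g) with hs | hs
  · exact .inl (isConj_of_even hs hg)
  · exact .inr (isConj_of_odd hs hg)

theorem orderOf_conj {x y : A5} (h : IsConj x y) : orderOf x = orderOf y := by
  obtain ⟨g, rfl⟩ := isConj_iff.1 h
  exact ((MulAut.conj g).orderOf_eq x).symm

theorem orderOf_tau (x : A5) : orderOf (tau x) = orderOf x := tau.orderOf_eq x

theorem orderOf_a2 : orderOf a2 = 2 :=
  orderOf_eq_prime (by decide) (by decide)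

theorem orderOf_a3 : orderOf a3 = 3 :=
  have : Fact (Nat.Prime 3) := ⟨by norm_num⟩
  orderOf_eq_prime (by decide) (by decide)

theorem orderOf_a5 : orderOf a5 = 5 :=
  have : Fact (Nat.Prime 5) := ⟨by norm_num⟩
  orderOf_eq_prime (by decide) (by decide)

theorem orderOf_cases (x : A5) :
    orderOf x = 1 ∨ orderOf x = 2 ∨ orderOf x = 3 ∨ orderOf x = 5 := by
  have key : ∀ x : Perm (Fin 5), sign x = 1 → x ^ 2 = 1 ∨ x ^ 3 = 1 ∨ x ^ 5 = 1 := by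
    decide +kernel
  have h : x ^ 2 = 1 ∨ x ^ 3 = 1 ∨ x ^ 5 = 1 := by
    simpa [Subtype.ext_iff] using key x x.2
  rcases h with h | h | h
  · rcases (Nat.dvd_prime (by norm_num)).1 (orderOf_dvd_of_pow_eq_one h) with h | h <;> simp [h]
  · rcases (Nat.dvd_prime (by norm_num)).1 (orderOf_dvd_of_pow_eq_one h) with h | h <;> simp [h]
  · rcases (Nat.dvd_prime (by norm_num)).1 (orderOf_dvd_of_pow_eq_one h) with h | h <;> simp [h]

/-- An even permutation of five points of prime order `p` has `2` cycles of length `p` if `p = 2`,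
and a single one otherwise; so its order determines its cycle type. -/
theorem cycleType_of_orderOf {x : A5} (h : (orderOf x).Prime) :
    (x : Perm (Fin 5)).cycleType =
      Multiset.replicate (if orderOf x = 2 then 2 else 1) (orderOf x) := by
  obtain ⟨n, hn⟩ := cycleType_prime_order (σ := (x : Perm (Fin 5))) (by simpa using h)
  have h1 := sum_cycleType_le (x : Perm (Fin 5))
  have h2 := sign_of_cycleType (x : Perm (Fin 5))
  rw [mem_alternatingGroup.1 x.2] at h2
  rw [hn] at h1 h2 ⊢
  rw [Subgroup.orderOf_coe] at h1 h2 ⊢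
  simp only [Multiset.sum_replicate, Fintype.card_fin, smul_eq_mul, Multiset.card_replicate]
    at h1 h2
  rcases orderOf_cases x with h | h | h | h <;> rw [h] at h1 h2 ⊢
  · simp_all
  · have : n < 2 := by omega
    interval_cases n
    · exact absurd h2 (by decide)
    · rfl
  · have : n = 0 := by omega
    subst this; rfl
  · have : n = 0 := by omega
    subst this; rfl

theorem isConj_or_of_orderOf {x y : A5} (h : orderOf x = orderOf y) :
    IsConj x y ∨ IsConj (tau x) y := by
  by_cases h1 : orderOf x = 1
  · have hx := orderOf_eq_one_iff.1 h1
    have hy := orderOf_eq_one_iff.1 (h ▸ h1)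
    exact .inl (by rw [hx, hy])
  · have hp : (orderOf x).Prime := by
      rcases orderOf_cases x with h | h | h | h <;> rw [h] at h1 ⊢ <;>
        first | exact absurd rfl h1 | norm_num
    apply isConj_or_of_perm
    rw [isConj_iff_cycleType_eq, cycleType_of_orderOf hp, cycleType_of_orderOf (h ▸ hp), h]

theorem tau_a2 : IsConj (tau a2) a2 :=
  isConj_of_odd (g := swap 1 4) (by decide) (by decide)

theorem tau_a3 : IsConj (tau a3) a3 :=
  isConj_of_odd (g := swap 0 4) (by decide) (by decide)

/-- The permutation `i ↦ 2 * i` of `ℤ/5ℤ`, a 4-cycle and hence odd, conjugates `a5` to `a5 ^ 2`. -/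
theorem tau_a5 : IsConj (tau a5) (a5 ^ 2) :=
  isConj_of_odd (g := swap 1 2 * swap 2 4 * swap 4 3) (by decide) (by decide)

theorem not_isConj_a5 : ¬ IsConj a5 (a5 ^ 2) := by
  have key : ∀ g : Perm (Fin 5), g * finRotate 5 = finRotate 5 ^ 2 * g → sign g = -1 := by
    decide +kernel
  intro h
  obtain ⟨⟨g, hg⟩, h⟩ := isConj_iff.1 h
  have := key g (by simpa [a5] using congrArg Subtype.val (mul_inv_eq_iff_eq_mul.1 h))
  rw [mem_alternatingGroup.1 hg] at this
  exact absurd this (by decide)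

/-- Representatives of the five conjugacy classes of `Alt(5)`. -/
theorem isConj_rep (x : A5) : x = 1 ∨ IsConj x a2 ∨ IsConj x a3 ∨ IsConj x a5 ∨
    IsConj x (a5 ^ 2) := by
  have flip {x y : A5} (h : IsConj (tau x) y) : IsConj x (tau y) := by
    simpa [tau_tau] using isConj_tau h
  rcases orderOf_cases x with h | h | h | h
  · exact .inl (orderOf_eq_one_iff.1 h)
  · rcases isConj_or_of_orderOf (h.trans orderOf_a2.symm) with h | h
    · exact .inr (.inl h)
    · exact .inr (.inl ((flip h).trans tau_a2))
  · rcases isConj_or_of_orderOf (h.trans orderOf_a3.symm) with h | h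
    · exact .inr (.inr (.inl h))
    · exact .inr (.inr (.inl ((flip h).trans tau_a3)))
  · rcases isConj_or_of_orderOf (h.trans orderOf_a5.symm) with h | h
    · exact .inr (.inr (.inr (.inl h)))
    · exact .inr (.inr (.inr (.inr ((flip h).trans tau_a5))))

/-- `tau` swaps the two classes of 5-cycles. -/
theorem not_isConj_tau {x : A5} (h : orderOf x = 5) : ¬ IsConj x (tau x) := by
  intro hx
  have h2 : orderOf (a5 ^ 2) = 5 := by rw [← orderOf_conj tau_a5, orderOf_tau, orderOf_a5]
  rcases isConj_rep x with h' | h' | h' | h' | h'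
  · simp [h'] at h
  · simp [orderOf_conj h', orderOf_a2] at h
  · simp [orderOf_conj h', orderOf_a3] at h
  · exact not_isConj_a5 ((h'.symm.trans hx).trans ((isConj_tau h').trans tau_a5))
  · have h3 : IsConj (tau (a5 ^ 2)) a5 := by simpa [tau_tau] using (isConj_tau tau_a5).symm
    exact not_isConj_a5 ((h'.symm.trans hx).trans ((isConj_tau h').trans h3)).symm

theorem isConj_hom_of_a5 {f : A5 →* A5} (hf : Function.Injective f) (h5 : IsConj a5 (f a5))
    (x : A5) : IsConj x (f x) := by
  have hord : orderOf (f x) = orderOf x := orderOf_injective f hf x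
  have key (r : A5) (hr : IsConj r (f r)) (hx : IsConj x r) : IsConj x (f x) :=
    (hx.trans hr).trans (f.map_isConj hx).symm
  have inner (r : A5) (ht : IsConj (tau r) r) : IsConj r (f r) := by
    rcases isConj_or_of_orderOf (orderOf_injective f hf r).symm with h | h
    · exact h
    · exact ht.symm.trans h
  rcases isConj_rep x with h | h | h | h | h
  · simp [h]
  · exact key _ (inner _ tau_a2) h
  · exact key _ (inner _ tau_a3) h
  · exact key _ h5 h
  · refine key _ ?_ h
    obtain ⟨g, hg⟩ := isConj_iff.1 h5
    rw [map_pow, ← hg, conj_pow]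
    exact isConj_iff.2 ⟨g, rfl⟩

/-- Every automorphism of `Alt(5)` acts on conjugacy classes either trivially or as `tau`. -/
theorem isConj_hom {f : A5 →* A5} (hf : Function.Injective f) :
    (∀ x, IsConj (f x) x) ∨ ∀ x, IsConj (f x) (tau x) := by
  rcases isConj_or_of_orderOf (orderOf_injective f hf a5).symm with h | h
  · exact .inl fun x => (isConj_hom_of_a5 hf h x).symm
  · right
    intro x
    have := isConj_hom_of_a5 (f := tau.toMonoidHom.comp f) (tau.injective.comp hf)
      (by simpa [tau_tau] using isConj_tau h) x
    simpa [tau_tau] using (isConj_tau this).symm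

/-! ### Subgroups of `Alt(5)` -/

theorem card_A5 : Nat.card A5 = 60 := by
  rw [nat_card_alternatingGroup]; simp [Nat.factorial]

/-- The index of `H` divides `60 / 15 = 4`, so if `H` is proper, then the simple group `Alt(5)` embeds
into `Sym(4)`, which is too small. -/
theorem eq_top_of_orders (H : Subgroup A5) {x y : A5} (hx : x ∈ H) (hy : y ∈ H)
    (ox : orderOf x = 3) (oy : orderOf y = 5) : H = ⊤ := by
  have h3 : 3 ∣ Nat.card H := ox ▸ Subgroup.orderOf_dvd_natCard H hx
  have h5 : 5 ∣ Nat.card H := by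
    simpa [oy] using Subgroup.orderOf_dvd_natCard H hy
  have h15 : 15 ∣ Nat.card H := Nat.Coprime.mul_dvd_of_dvd_of_dvd (by norm_num) h3 h5
  have hi := H.card_mul_index
  rw [card_A5] at hi
  obtain ⟨k, hk⟩ := h15
  have h4 : H.index ∣ 4 := ⟨k, by nlinarith⟩
  have hcore : H.normalCore.index ∣ 24 := by
    have h : H.normalCore.index ∣ H.index.factorial := by
      rw [Subgroup.normalCore_eq_ker, Subgroup.index_ker, Subgroup.index_eq_card, ← Nat.card_perm]
      exact Subgroup.card_subgroup_dvd_card (MulAction.toPermHom A5 (A5 ⧸ H)).range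
    exact h.trans (Nat.factorial_dvd_factorial (Nat.le_of_dvd (by norm_num) h4))
  rcases H.normalCore_normal.eq_bot_or_eq_top with h | h
  · rw [h, Subgroup.index_bot, card_A5] at hcore
    norm_num at hcore
  · exact top_le_iff.1 (h ▸ H.normalCore_le)

/-- The stabilizer of the point `0`, isomorphic to `Alt(4)`. -/
def stab0 : Subgroup A5 := MulAction.stabilizer A5 (0 : Fin 5)

theorem stab0_ne_top : stab0 ≠ ⊤ := by
  intro h
  have : a5 ∈ stab0 := h ▸ Subgroup.mem_top _
  exact absurd (MulAction.mem_stabilizer_iff.1 this) (by decide)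

/-- The normalizer of a Sylow 5-subgroup, a dihedral group of order 10. -/
def dih : Subgroup A5 := Subgroup.normalizer (Subgroup.zpowers a5 : Set A5)

theorem a5_mem_dih : a5 ∈ dih := Subgroup.le_normalizer (Subgroup.mem_zpowers a5)

theorem a2_mem_dih : a2 ∈ dih := by
  have h : a2 * a5 * a2⁻¹ = a5⁻¹ := by decide
  refine Subgroup.mem_normalizer_iff_map_conj_eq.2 ?_
  rw [MonoidHom.map_zpowers]
  simp [h]

theorem dih_ne_top : dih ≠ ⊤ := by
  intro h
  have hn : (Subgroup.zpowers a5).Normal := Subgroup.normalizer_eq_top_iff.1 h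
  have hc : Nat.card (Subgroup.zpowers a5) = 5 := by rw [Nat.card_zpowers, orderOf_a5]
  rcases hn.eq_bot_or_eq_top with h | h
  · rw [h] at hc; simp at hc
  · rw [h, Subgroup.card_top, card_A5] at hc; norm_num at hc

theorem exists_isConj_mem_stab0 {x : A5} (h : orderOf x ≠ 5) : ∃ y ∈ stab0, IsConj x y := by
  have h2 : orderOf (a5 ^ 2) = 5 := by rw [← orderOf_conj tau_a5, orderOf_tau, orderOf_a5]
  rcases isConj_rep x with h' | h' | h' | h' | h'
  · exact ⟨1, one_mem _, by rw [h']⟩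
  · exact ⟨a2, MulAction.mem_stabilizer_iff.2 (by decide), h'⟩
  · exact ⟨a3, MulAction.mem_stabilizer_iff.2 (by decide), h'⟩
  · exact absurd ((orderOf_conj h').trans orderOf_a5) h
  · exact absurd ((orderOf_conj h').trans h2) h

theorem exists_isConj_mem_dih {x : A5} (h : orderOf x ≠ 3) : ∃ y ∈ dih, IsConj x y := by
  rcases isConj_rep x with h' | h' | h' | h' | h'
  · exact ⟨1, one_mem _, by rw [h']⟩
  · exact ⟨a2, a2_mem_dih, h'⟩
  · exact absurd ((orderOf_conj h').trans orderOf_a3) h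
  · exact ⟨a5, a5_mem_dih, h'⟩
  · exact ⟨a5 ^ 2, pow_mem a5_mem_dih 2, h'⟩

/-! ### Subgroups of `Alt(5)^n` -/

/-- A subgroup of `Alt(5)^n` projecting onto every pair of coordinates is the whole group: the
subgroup of those values at coordinate `i` that are attained by elements trivial on a set `J` of
other coordinates stays everything when `J` grows by `k`, because it then contains all commutators
of a value attained with trivial `J`-part and one attained with trivial `k`-coordinate. -/
theorem eq_top_of_pairs {n : ℕ} (H : Subgroup (Fin n → A5))
    (hproj : ∀ i x, ∃ h ∈ H, h i = x)
    (hpair : ∀ i j, i ≠ j → ∀ x, ∃ h ∈ H, h i = x ∧ h j = 1) : H = ⊤ := by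
  have key (i : Fin n) (J : Finset (Fin n)) : i ∉ J →
      ∀ x, ∃ h ∈ H, h i = x ∧ ∀ j ∈ J, h j = 1 := by
    induction J using Finset.induction_on with
    | empty => simpa using hproj i
    | insert k J hk ih =>
      intro hi
      simp only [Finset.mem_insert, not_or] at hi
      let K : Subgroup A5 :=
        { carrier := {x | ∃ h ∈ H, h i = x ∧ ∀ j ∈ insert k J, h j = 1}
          one_mem' := ⟨1, one_mem H, rfl, fun _ _ => rfl⟩
          mul_mem' := by
            rintro _ _ ⟨h, hh, rfl, h1⟩ ⟨h', hh', rfl, h1'⟩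
            exact ⟨h * h', mul_mem hh hh', rfl, fun j hj => by simp [h1 j hj, h1' j hj]⟩
          inv_mem' := by
            rintro _ ⟨h, hh, rfl, h1⟩
            exact ⟨h⁻¹, inv_mem hh, rfl, fun j hj => by simp [h1 j hj]⟩ }
      have hK : commutator A5 ≤ K := by
        rw [commutator_eq_closure, Subgroup.closure_le]
        rintro _ ⟨x, y, rfl⟩
        obtain ⟨h, hh, rfl, h1⟩ := ih hi.2 x
        obtain ⟨h', hh', rfl, h1'⟩ := hpair i k hi.1 y
        refine ⟨h * h' * h⁻¹ * h'⁻¹, ?_, rfl, fun j hj => ?_⟩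
        · exact mul_mem (mul_mem (mul_mem hh hh') (inv_mem hh)) (inv_mem hh')
        · change h j * h' j * (h j)⁻¹ * (h' j)⁻¹ = 1
          rcases Finset.mem_insert.1 hj with rfl | hj
          · simp [h1']
          · simp [h1 j hj]
      rw [commutator_alternatingGroup_eq_top (by simp)] at hK
      exact fun x => hK (Subgroup.mem_top x)
  refine eq_top_iff.2 fun g _ => Subgroup.pi_mem_of_mulSingle_mem g fun i => ?_
  obtain ⟨h, hh, h1, h2⟩ := key i (Finset.univ.erase i) (by simp) (g i)
  convert! hh
  ext1 j
  by_cases hj : j = i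
  · subst hj; simp [h1]
  · rw [h2 j (by simp [hj]), Pi.mulSingle_eq_of_ne hj]

/-- Goursat's lemma for a pair of coordinates. -/
theorem pair_or_graph {n : ℕ} (H : Subgroup (Fin n → A5))
    (hproj : ∀ i x, ∃ h ∈ H, h i = x) (i j : Fin n) :
    (∀ x, ∃ h ∈ H, h i = x ∧ h j = 1) ∨
      ∃ f : A5 →* A5, Function.Injective f ∧ ∀ h ∈ H, h i = f (h j) := by
  let K : Subgroup A5 :=
    { carrier := {x | ∃ h ∈ H, h i = x ∧ h j = 1}
      one_mem' := ⟨1, one_mem H, rfl, rfl⟩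
      mul_mem' := by
        rintro _ _ ⟨h, hh, rfl, h1⟩ ⟨h', hh', rfl, h1'⟩
        exact ⟨h * h', mul_mem hh hh', rfl, by simp [h1, h1']⟩
      inv_mem' := by
        rintro _ ⟨h, hh, rfl, h1⟩
        exact ⟨h⁻¹, inv_mem hh, rfl, by simp [h1]⟩ }
  have hK : K.Normal := by
    constructor
    rintro _ ⟨h, hh, rfl, h1⟩ g
    obtain ⟨k, hk, rfl⟩ := hproj i g
    exact ⟨k * h * k⁻¹, mul_mem (mul_mem hk hh) (inv_mem hk), rfl, by simp [h1]⟩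
  rcases hK.eq_bot_or_eq_top with h | h
  · right
    have hker {g : Fin n → A5} (hg : g ∈ H) (h1 : g j = 1) : g i = 1 := by
      rw [← Subgroup.mem_bot, ← h]
      exact ⟨g, hg, rfl, h1⟩
    have huniq {g g' : Fin n → A5} (hg : g ∈ H) (hg' : g' ∈ H) (h1 : g j = g' j) : g i = g' i := by
      have := hker (mul_mem hg (inv_mem hg')) (by simp [h1])
      simpa [mul_inv_eq_one] using this
    choose r hr hrj using hproj j
    let f : A5 →* A5 :=
      MonoidHom.mk' (fun x => r x i) fun x y =>
        huniq (hr _) (mul_mem (hr x) (hr y)) (by simp [hrj])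
    have hf : ∀ g ∈ H, g i = f (g j) := fun g hg => huniq hg (hr _) (hrj _).symm
    refine ⟨f, ?_, hf⟩
    rcases (inferInstance : f.ker.Normal).eq_bot_or_eq_top with hk | hk
    · exact (MonoidHom.ker_eq_bot_iff f).1 hk
    · obtain ⟨g, hg, hgi⟩ := hproj i a5
      have hfg : f (g j) = 1 := by rw [← MonoidHom.mem_ker, hk]; trivial
      have h5 := orderOf_a5
      rw [← hgi, hf g hg, hfg, orderOf_one] at h5
      norm_num at h5
  · left
    intro x
    have : x ∈ K := h ▸ Subgroup.mem_top x
    exact this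

/-! ### A criterion for invariable generation -/

/-- Coordinates `i` and `j` are related by `T` if the classes of `s i` and `s j`, for `s ∈ T`,
correspond to each other either always identically or always by `tau`; equivalently, `T` lies in the
union of the conjugates of a diagonal subgroup on `i` and `j`. -/
def Linked {n : ℕ} (T : Set (Fin n → A5)) (i j : Fin n) : Prop :=
  (∀ s ∈ T, IsConj (s i) (s j)) ∨ ∀ s ∈ T, IsConj (s i) (tau (s j))

/-- Every coordinate attains the orders `3` and `5` on `T`, and no two distinct coordinates are
linked by `T`. -/
def Criterion {n : ℕ} (T : Set (Fin n → A5)) : Prop :=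
  (∀ i, ∀ k ∈ ({3, 5} : Finset ℕ), ∃ s ∈ T, orderOf (s i) = k) ∧ ∀ i j, i ≠ j → ¬ Linked T i j

theorem not_invGen {G : Type*} [Group G] {T : Set G} {M : Subgroup G} (hM : M ≠ ⊤)
    (h : ∀ s ∈ T, ∃ g, g * s * g⁻¹ ∈ M) : ¬ InvGen T := by
  classical
  intro hT
  choose! g hg using h
  refine hM (top_le_iff.1 ?_)
  rw [← hT fun s => (g s)⁻¹, Subgroup.closure_le]
  rintro _ ⟨s, hs, rfl⟩
  simpa using hg s hs

theorem not_invGen_coord {n : ℕ} {T : Set (Fin n → A5)} (i : Fin n) {M : Subgroup A5}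
    (hM : M ≠ ⊤) (h : ∀ s ∈ T, ∃ y ∈ M, IsConj (s i) y) : ¬ InvGen T := by
  refine not_invGen (M := M.comap (Pi.evalMonoidHom (fun _ : Fin n => A5) i)) ?_ fun s hs => ?_
  · intro hc
    refine hM (eq_top_iff.2 fun x _ => ?_)
    have : Pi.mulSingle i x ∈ M.comap (Pi.evalMonoidHom (fun _ : Fin n => A5) i) :=
      hc ▸ Subgroup.mem_top _
    simpa using this
  · obtain ⟨y, hy, hc⟩ := h s hs
    obtain ⟨g, rfl⟩ := isConj_iff.1 hc
    exact ⟨Pi.mulSingle i g, by simpa using hy⟩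

theorem not_invGen_diag {n : ℕ} {T : Set (Fin n → A5)} {i j : Fin n} (hij : i ≠ j) (f : A5 →* A5)
    (h : ∀ s ∈ T, IsConj (s i) (f (s j))) : ¬ InvGen T := by
  refine not_invGen (M := (Pi.evalMonoidHom (fun _ : Fin n => A5) i).eqLocus
    (f.comp (Pi.evalMonoidHom (fun _ : Fin n => A5) j))) ?_ fun s hs => ?_
  · intro hc
    have : Pi.mulSingle i a5 ∈ (Pi.evalMonoidHom (fun _ : Fin n => A5) i).eqLocus
        (f.comp (Pi.evalMonoidHom (fun _ : Fin n => A5) j)) := hc ▸ Subgroup.mem_top _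
    have h1 : a5 = 1 := by
      change (Pi.mulSingle i a5 : Fin n → A5) i = f ((Pi.mulSingle i a5 : Fin n → A5) j) at this
      simpa [Pi.mulSingle_eq_of_ne hij.symm] using this
    have h5 := orderOf_a5
    rw [h1, orderOf_one] at h5
    norm_num at h5
  · obtain ⟨g, hg⟩ := isConj_iff.1 (h s hs)
    refine ⟨Pi.mulSingle i g, ?_⟩
    change (Pi.mulSingle i g : Fin n → A5) i * s i * ((Pi.mulSingle i g : Fin n → A5) i)⁻¹ =
      f ((Pi.mulSingle i g : Fin n → A5) j * s j * ((Pi.mulSingle i g : Fin n → A5) j)⁻¹)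
    simp [Pi.mulSingle_eq_of_ne hij.symm, hg]

theorem criterion_of_invGen {n : ℕ} {T : Set (Fin n → A5)} (hT : InvGen T) : Criterion T := by
  refine ⟨fun i k hk => ?_, fun i j hij hl => ?_⟩
  · by_contra! hc
    rcases Finset.mem_insert.1 hk with rfl | hk
    · exact not_invGen_coord i dih_ne_top (fun s hs => exists_isConj_mem_dih (hc s hs)) hT
    · rw [Finset.mem_singleton] at hk
      exact not_invGen_coord i stab0_ne_top
        (fun s hs => exists_isConj_mem_stab0 (hk ▸ hc s hs)) hT
  · rcases hl with hl | hl
    · exact not_invGen_diag hij (MonoidHom.id A5) hl hT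
    · exact not_invGen_diag hij tau.toMonoidHom hl hT

theorem invGen_of_criterion {n : ℕ} {T : Set (Fin n → A5)} (hT : Criterion T) : InvGen T := by
  intro σ
  set H := Subgroup.closure ((fun g => (σ g)⁻¹ * g * σ g) '' T) with hH
  have hmem (s) (hs : s ∈ T) : (σ s)⁻¹ * s * σ s ∈ H :=
    Subgroup.subset_closure (Set.mem_image_of_mem _ hs)
  have hconj (s : Fin n → A5) (i) : IsConj (s i) (((σ s)⁻¹ * s * σ s) i) :=
    isConj_iff.2 ⟨(σ s i)⁻¹, by simp⟩
  have hproj : ∀ i x, ∃ h ∈ H, h i = x := by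
    intro i x
    obtain ⟨s, hs, h3⟩ := hT.1 i 3 (by simp)
    obtain ⟨t, ht, h5⟩ := hT.1 i 5 (by simp)
    have := eq_top_of_orders (H.map (Pi.evalMonoidHom (fun _ : Fin n => A5) i))
      (Subgroup.mem_map_of_mem _ (hmem s hs)) (Subgroup.mem_map_of_mem _ (hmem t ht))
      ((orderOf_conj (hconj s i)).symm.trans h3) ((orderOf_conj (hconj t i)).symm.trans h5)
    have hx : x ∈ H.map (Pi.evalMonoidHom (fun _ : Fin n => A5) i) := this ▸ Subgroup.mem_top x
    exact Subgroup.mem_map.1 hx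
  refine eq_top_of_pairs H hproj fun i j hij => ?_
  refine (pair_or_graph H hproj i j).resolve_right ?_
  rintro ⟨f, hf, hg⟩
  refine hT.2 i j hij ((isConj_hom hf).imp (fun h s hs => ?_) fun h s hs => ?_)
  · refine ((hconj s i).trans ?_).trans (hconj s j).symm
    rw [hg _ (hmem s hs)]
    exact h _
  · refine ((hconj s i).trans ?_).trans (isConj_tau (hconj s j).symm)
    rw [hg _ (hmem s hs)]
    exact h _

/-! ### The upper bound -/

theorem Linked.refl {n : ℕ} (T : Set (Fin n → A5)) (i : Fin n) : Linked T i i :=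
  .inl fun _ _ => .refl _

theorem Linked.symm {n : ℕ} {T : Set (Fin n → A5)} {i j : Fin n} (h : Linked T i j) :
    Linked T j i :=
  h.imp (fun h s hs => (h s hs).symm)
    fun h s hs => by simpa [tau_tau] using isConj_tau (h s hs).symm

theorem Linked.trans {n : ℕ} {T : Set (Fin n → A5)} {i j k : Fin n} (h : Linked T i j)
    (h' : Linked T j k) : Linked T i k := by
  rcases h with h | h <;> rcases h' with h' | h'
  · exact .inl fun s hs => (h s hs).trans (h' s hs)
  · exact .inr fun s hs => (h s hs).trans (h' s hs)
  · exact .inr fun s hs => (h s hs).trans (isConj_tau (h' s hs))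
  · exact .inl fun s hs => by simpa [tau_tau] using (h s hs).trans (isConj_tau (h' s hs))

theorem Linked.mono {n : ℕ} {T T' : Set (Fin n → A5)} (hT : T ⊆ T') {i j : Fin n}
    (h : Linked T' i j) : Linked T i j :=
  h.imp (fun h s hs => h s (hT hs)) fun h s hs => h s (hT hs)

theorem Linked.exists_orderOf {n : ℕ} {T : Set (Fin n → A5)} {i j : Fin n} (h : Linked T i j)
    {k : ℕ} (hi : ∃ s ∈ T, orderOf (s i) = k) : ∃ s ∈ T, orderOf (s j) = k := by
  obtain ⟨s, hs, rfl⟩ := hi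
  refine ⟨s, hs, ?_⟩
  rcases h with h | h
  · exact (orderOf_conj (h s hs)).symm
  · rw [orderOf_conj (h s hs), orderOf_tau]

open Classical in
/-- The potential of `T`: the pairs `(i, k)` such that `i` is the least coordinate in its class of
`T`-linked coordinates and an element of `T` has order `k ∈ {3, 5}` at `i`. -/
noncomputable def potential {n : ℕ} (T : Set (Fin n → A5)) : Finset (Fin n × ℕ) :=
  (Finset.univ ×ˢ ({3, 5} : Finset ℕ)).filter fun p : Fin n × ℕ =>
    (∃ s ∈ T, orderOf (s p.1) = p.2) ∧ ∀ j < p.1, ¬ Linked T j p.1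

theorem mem_potential {n : ℕ} {T : Set (Fin n → A5)} {i : Fin n} {k : ℕ} :
    (i, k) ∈ potential T ↔ k ∈ ({3, 5} : Finset ℕ) ∧
      (∃ s ∈ T, orderOf (s i) = k) ∧ ∀ j < i, ¬ Linked T j i := by
  simp [potential]

theorem card_potential_le {n : ℕ} (T : Set (Fin n → A5)) : (potential T).card ≤ 2 * n := by
  classical
  refine (Finset.card_filter_le _ _).trans ?_
  simp [Finset.card_product, mul_comm]

theorem potential_mono {n : ℕ} {T T' : Set (Fin n → A5)} (h : T ⊆ T') :
    potential T ⊆ potential T' := by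
  rintro ⟨i, k⟩ hp
  rw [mem_potential] at hp ⊢
  obtain ⟨hk, ⟨s, hs, hsk⟩, hj⟩ := hp
  exact ⟨hk, ⟨s, h hs, hsk⟩, fun j hji hl => hj j hji (hl.mono h)⟩

/-- As long as `T` fails the criterion, some element of `S` increases the potential: one supplying
a missing order to the least coordinate of a class, or else one splitting a class. A single element
suffices for the latter, since a class in which order `5` occurs is linked in only one of the two
possible ways. -/
theorem exists_potential_lt {n : ℕ} {S T : Set (Fin n → A5)} (hS : Criterion S)
    (hT : ¬ Criterion T) : ∃ s ∈ S, (potential T).card < (potential (insert s T)).card := by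
  suffices h : ∃ s ∈ S, ∃ p ∈ potential (insert s T), p ∉ potential T by
    obtain ⟨s, hs, p, hp, hpT⟩ := h
    exact ⟨s, hs, Finset.card_lt_card
      ⟨potential_mono (Set.subset_insert s T), fun hc => hpT (hc hp)⟩⟩
  by_cases h : ∀ i, ∀ k ∈ ({3, 5} : Finset ℕ), ∃ s ∈ T, orderOf (s i) = k
  · obtain ⟨i, j, hlt, hl, hj⟩ : ∃ i j, j < i ∧ Linked T i j ∧ ∀ l, Linked T l j → j ≤ l := by
      obtain ⟨i, j, hij, hl⟩ : ∃ i j, i ≠ j ∧ Linked T i j := by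
        by_contra! hc
        exact hT ⟨h, hc⟩
      obtain ⟨m, hm, hmin⟩ := WellFounded.has_min (r := ((· < ·) : Fin n → Fin n → Prop))
        wellFounded_lt {m | Linked T m i} ⟨i, .refl T i⟩
      have hm' (l) (hlm : Linked T l m) : m ≤ l := not_lt.1 (hmin l (hlm.trans hm))
      by_cases hmi : m = i
      · subst hmi
        exact ⟨j, m, lt_of_le_of_ne (hm' j hl.symm) hij, hl.symm, hm'⟩
      · exact ⟨i, m, lt_of_le_of_ne (hm' i hm.symm) hmi, hm.symm, hm'⟩
    have hij : i ≠ j := hlt.ne'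
    obtain ⟨s, hs, hns⟩ : ∃ s ∈ S, ¬ Linked (insert s T) i j := by
      obtain ⟨t, ht, ht5⟩ := h j 5 (by simp)
      have hnot := hS.2 i j hij
      simp only [Linked, not_or, not_forall] at hnot
      obtain ⟨⟨u, hu, hu'⟩, v, hv, hv'⟩ := hnot
      rcases hl with hl | hl
      · refine ⟨u, hu, ?_⟩
        rintro (hl' | hl')
        · exact hu' (hl' u (Set.mem_insert _ _))
        · exact not_isConj_tau ht5 ((hl t ht).symm.trans (hl' t (Set.mem_insert_of_mem _ ht)))
      · refine ⟨v, hv, ?_⟩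
        rintro (hl' | hl')
        · exact not_isConj_tau ht5 ((hl' t (Set.mem_insert_of_mem _ ht)).symm.trans (hl t ht))
        · exact hv' (hl' v (Set.mem_insert _ _))
    -- The least coordinate split off from the least element `j` of its old class is new.
    obtain ⟨m, ⟨hm1, hm2⟩, hmin⟩ := WellFounded.has_min (r := ((· < ·) : Fin n → Fin n → Prop))
      wellFounded_lt {m | Linked T m j ∧ ¬ Linked (insert s T) m j} ⟨i, hl, hns⟩
    have hjm : j < m := lt_of_le_of_ne (hj m hm1) (by rintro rfl; exact hm2 (.refl _ _))
    obtain ⟨t, ht, ht3⟩ := h m 3 (by simp)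
    refine ⟨s, hs, (m, 3), mem_potential.2
      ⟨by simp, ⟨t, Set.mem_insert_of_mem _ ht, ht3⟩, fun l hlm hl' => ?_⟩,
      fun hc => (mem_potential.1 hc).2.2 j hjm hm1.symm⟩
    exact hmin l ⟨(hl'.mono (Set.subset_insert s T)).trans hm1,
      fun hlj => hm2 (hl'.symm.trans hlj)⟩ hlm
  · push Not at h
    obtain ⟨i, k, hk, hik⟩ := h
    obtain ⟨m, hm, hmin⟩ := WellFounded.has_min (r := ((· < ·) : Fin n → Fin n → Prop))
      wellFounded_lt {m | Linked T m i} ⟨i, .refl T i⟩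
    obtain ⟨s, hs, hsk⟩ := hS.1 m k hk
    refine ⟨s, hs, (m, k), mem_potential.2 ⟨hk, ⟨s, Set.mem_insert _ _, hsk⟩, fun j hj hl => ?_⟩,
      fun hc => ?_⟩
    · exact hmin j ((hl.mono (Set.subset_insert s T)).trans hm) hj
    · obtain ⟨t, ht, htk⟩ := Linked.exists_orderOf hm (mem_potential.1 hc).2.1
      exact hik t ht htk

theorem exists_invGen_subset {n : ℕ} {S : Set (Fin n → A5)} (hS : InvGen S) :
    ∃ T ⊆ S, InvGen T ∧ T.ncard ≤ 2 * n := by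
  -- A subset with at most as many elements as its potential, of maximal size.
  let P : Set (Set (Fin n → A5)) := {T | T ⊆ S ∧ T.ncard ≤ (potential T).card}
  obtain ⟨T, ⟨hTS, hTc⟩, hmax⟩ := (Set.toFinite P).exists_maximalFor Set.ncard P
    ⟨∅, Set.empty_subset _, by simp⟩
  refine ⟨T, hTS, ?_, hTc.trans (card_potential_le T)⟩
  by_contra hT
  obtain ⟨s, hs, hlt⟩ := exists_potential_lt (criterion_of_invGen hS)
    fun hc => hT (invGen_of_criterion hc)
  have hsT : s ∉ T := fun h => by simp [Set.insert_eq_of_mem h] at hlt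
  have hcard : (insert s T).ncard = T.ncard + 1 := Set.ncard_insert_of_notMem hsT
  have := hmax (j := insert s T) ⟨Set.insert_subset hs hTS, by omega⟩ (by simp [hcard])
  omega

theorem ncard_le_of_minInvGen {n : ℕ} {S : Set (Fin n → A5)} (hS : MinInvGen S) :
    S.ncard ≤ 2 * n := by
  obtain ⟨T, hTS, hT, hc⟩ := exists_invGen_subset hS.1
  rcases hTS.eq_or_ssubset with rfl | h
  · exact hc
  · exact absurd hT (hS.2 T h)

/-! ### The lower bound -/

/-- The element of `Alt(5)^n` with a 3-cycle (for `false`) or a 5-cycle (for `true`) at one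
coordinate and trivial elsewhere. -/
def gen {n : ℕ} (p : Fin n × Bool) : Fin n → A5 := Pi.mulSingle p.1 (if p.2 then a5 else a3)

theorem orderOf_gen {n : ℕ} (p : Fin n × Bool) (i : Fin n) :
    orderOf (gen p i) = if i = p.1 then (if p.2 then 5 else 3) else 1 := by
  obtain ⟨j, b⟩ := p
  by_cases h : i = j
  · subst h
    cases b <;> simp [gen, orderOf_a3, orderOf_a5]
  · simp [gen, h]

theorem gen_injective {n : ℕ} : Function.Injective (gen (n := n)) := by
  rintro ⟨i, b⟩ ⟨j, c⟩ h
  have h1 := congrArg (fun g => orderOf (g i)) h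
  simp only [orderOf_gen] at h1
  by_cases hij : i = j
  · subst hij
    cases b <;> cases c <;> simp_all
  · cases b <;> simp [hij] at h1

theorem minInvGen_range_gen (n : ℕ) : MinInvGen (Set.range (gen (n := n))) := by
  refine ⟨invGen_of_criterion ⟨fun i k hk => ?_, fun i j hij hl => ?_⟩, fun T hT hI => ?_⟩
  · rcases Finset.mem_insert.1 hk with rfl | hk
    · exact ⟨_, ⟨(i, false), rfl⟩, by simp [orderOf_gen]⟩
    · rw [Finset.mem_singleton] at hk
      exact ⟨_, ⟨(i, true), rfl⟩, by simp [orderOf_gen, hk]⟩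
  · obtain ⟨s, ⟨p, rfl⟩, h⟩ : ∃ s ∈ Set.range (gen (n := n)), orderOf (s i) ≠ orderOf (s j) :=
      ⟨_, ⟨(i, false), rfl⟩, by simp [orderOf_gen, hij.symm]⟩
    rcases hl with hl | hl
    · exact h (orderOf_conj (hl _ ⟨p, rfl⟩))
    · exact h ((orderOf_conj (hl _ ⟨p, rfl⟩)).trans (orderOf_tau _))
  · obtain ⟨_, ⟨⟨i, b⟩, rfl⟩, hnot⟩ := Set.exists_of_ssubset hT
    obtain ⟨s, hs, hord⟩ := (criterion_of_invGen hI).1 i (if b then 5 else 3) (by cases b <;> simp)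
    obtain ⟨⟨j, c⟩, rfl⟩ := hT.1 hs
    rw [orderOf_gen] at hord
    by_cases hij : i = j
    · subst hij
      have : c = b := by cases b <;> cases c <;> simp_all
      exact hnot (this ▸ hs)
    · cases b <;> simp [hij] at hord

/-- For every positive integer `n`, `m_I(Alt(5)^n) = 2n`. -/
theorem stmt11 (n : ℕ) (hn : 0 < n) :
    mInv (Fin n → alternatingGroup (Fin 5)) = 2 * n := by
  refine IsGreatest.csSup_eq ⟨⟨_, minInvGen_range_gen n, ?_⟩, ?_⟩
  · rw [Set.ncard_range_of_injective gen_injective]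
    simp [mul_comm]
  · rintro _ ⟨S, hS, rfl⟩
    exact ncard_le_of_minInvGen hS
end

section
/- For every integer n ≥ 2, there exists a finite group G which is not invariable n-ary. -/
/-- The closure operator `C(X)`: the union of `X` with the intersection, over all
choices of conjugators (one for each element), of the subgroups generated by the
conjugated elements. -/
def copC {G : Type*} [Group G] (X : Set G) : Set G :=
  X ∪ ⋂ σ : G → G, (Subgroup.closure ((fun g => (σ g)⁻¹ * g * σ g) '' X) : Set G)

/-- `C_n(X) = ⋃ {C(Y) : Y ⊆ X, |Y| ≤ n}`. -/
def copCn {G : Type*} [Group G] (n : ℕ) (X : Set G) : Set G :=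
  ⋃ Y ∈ {Y : Set G | Y ⊆ X ∧ Y.ncard ≤ n}, copC Y

/-- The iterates `C_n^{k+1}(X)`: `copCnIter n X 0 = C_n(X)` and
`copCnIter n X (k+1) = C_n (copCnIter n X k)`. -/
def copCnIter {G : Type*} [Group G] (n : ℕ) (X : Set G) : ℕ → Set G
  | 0 => copCn n X
  | (k + 1) => copCn n (copCnIter n X k)

/-- `G` is invariable `n`-ary if `C(X) = ⋃_{k ≥ 1} C_n^k(X)` for every `X ⊆ G`. -/
def InvariableNary (G : Type*) [Group G] (n : ℕ) : Prop :=
  ∀ X : Set G, copC X = ⋃ k : ℕ, copCnIter n X k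

namespace NotNary

/-- The symmetric group on three letters. -/
abbrev S3 : Type := Equiv.Perm (Fin 3)

/-- The direct power of `S₃` indexed by the cube `{0,1}ⁿ`. -/
abbrev CubeGroup (n : ℕ) : Type := (Fin n → Bool) → S3

/-- A 3-cycle in `S₃`. -/
def rot : S3 := finRotate 3

/-- A transposition in `S₃`. -/
def refl : S3 := Equiv.swap 0 1

lemma conj_rot : ∀ g : S3, g⁻¹ * rot * g = rot ∨ g⁻¹ * rot * g = rot⁻¹ := by decide

set_option maxRecDepth 4000 in
/-- A transposition inverts a 3-cycle `x`, so their commutator is `x⁻² = x`. -/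
lemma comm_conj : ∀ g k : S3,
    (g⁻¹ * refl * g) * (k⁻¹ * rot * k) * (g⁻¹ * refl * g)⁻¹ * (k⁻¹ * rot * k)⁻¹
      = k⁻¹ * rot * k := by decide

lemma eq_one_of_central : ∀ x : S3, (∀ t, t * x * t⁻¹ = x) → x = 1 := by decide

lemma eq_one_of_conj_refl : ∀ x : S3, (∀ t, t * x * t⁻¹ = 1 ∨ t * x * t⁻¹ = refl) → x = 1 := by
  decide

lemma rot_ne_one : rot ≠ 1 := by decide

lemma refl_ne_one : refl ≠ 1 := by decide

lemma rot_ne_refl : rot ≠ refl := by decide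

lemma refl_mul_refl : refl * refl = 1 := by decide

lemma refl_inv : refl⁻¹ = refl := by decide

variable {n : ℕ}

/-- The constant function at the 3-cycle. -/
def c (n : ℕ) : CubeGroup n := fun _ => rot

/-- The function equal to the transposition on the face `aᵢ = 1` and trivial elsewhere. -/
def h (i : Fin n) : CubeGroup n := fun a => if a i then refl else 1

/-- The set witnessing that `CubeGroup n` is not invariable `n`-ary. -/
def X (n : ℕ) : Set (CubeGroup n) := insert (c n) (Set.range h)

/-- The function supported at `(1, …, 1)` with value the 3-cycle. -/
def w (n : ℕ) : CubeGroup n := fun a => if ∀ i, a i = true then rot else 1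

lemma h_injective : Function.Injective (h (n := n)) := by
  intro i j hij
  by_contra hne
  have := congrFun hij (fun k => decide (k = i))
  have hji : ¬ j = i := fun e => hne e.symm
  simp [h, hji, refl_ne_one] at this

lemma c_not_mem : c n ∉ Set.range (h (n := n)) := by
  rintro ⟨i, hi⟩
  have := congrFun hi (fun _ => true)
  simp only [h, c, if_true] at this
  exact rot_ne_refl this.symm

lemma ncard_X : (X n).ncard = n + 1 := by
  rw [X, Set.ncard_insert_of_notMem c_not_mem (Set.toFinite _),
    ← Set.image_univ, Set.ncard_image_of_injective _ h_injective]
  simp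

/-- The functions with values in the subgroup generated by the transposition. -/
def reflValued (n : ℕ) : Subgroup (CubeGroup n) where
  carrier := {f | ∀ a, f a = 1 ∨ f a = refl}
  one_mem' := fun _ => Or.inl rfl
  mul_mem' := by
    intro f g hf hg a
    rcases hf a with h1 | h1 <;> rcases hg a with h2 | h2 <;> simp [h1, h2, refl_mul_refl]
  inv_mem' := by
    intro f hf a
    rcases hf a with h1 | h1 <;> simp [h1, refl_inv]

/-- The functions that do not depend on the `i`-th coordinate. -/
def indep (i : Fin n) : Subgroup (CubeGroup n) where
  carrier := {f | ∀ a, f (Function.update a i (!a i)) = f a}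
  one_mem' := fun _ => rfl
  mul_mem' := by
    intro f g hf hg a
    simp only [Pi.mul_apply, hf a, hg a]
  inv_mem' := by
    intro f hf a
    simp only [Pi.inv_apply, hf a]

/-- The intersection defining `copC Y` lies in the normal core of any subgroup containing `Y`:
use the same conjugator for all elements of `Y`. -/
lemma conj_mem {G : Type*} [Group G] {Y : Set G} {K : Subgroup G} (hY : Y ⊆ K) {f : G}
    (hf : f ∈ ⋂ σ : G → G, (Subgroup.closure ((fun g => (σ g)⁻¹ * g * σ g) '' Y) : Set G))
    (g : G) : g * f * g⁻¹ ∈ K := by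
  have h1 := Set.mem_iInter.1 hf (fun _ => g)
  have h2 : Subgroup.closure ((fun y => g⁻¹ * y * g) '' Y)
      ≤ K.comap (MulAut.conj g).toMonoidHom := by
    rw [Subgroup.closure_le]
    rintro _ ⟨y, hy, rfl⟩
    have : g * (g⁻¹ * y * g) * g⁻¹ = y := by group
    simpa [this] using hY hy
  simpa using h2 h1

lemma eq_one_of_conj_reflValued {f : CubeGroup n} (hf : ∀ g, g * f * g⁻¹ ∈ reflValued n) :
    f = 1 := by
  funext a
  exact eq_one_of_conj_refl _ fun t => hf (fun _ => t) a

lemma eq_one_of_conj_indep (i : Fin n) {f : CubeGroup n} (hf : ∀ g, g * f * g⁻¹ ∈ indep i) :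
    f = 1 := by
  funext a
  refine eq_one_of_central _ fun t => ?_
  have h0 : f (Function.update a i (!a i)) = f a := by simpa using hf 1 a
  -- conjugate by `t` at the single point `a`, leaving the neighbour of `a` untouched
  have h1 := hf (Pi.mulSingle a t) a
  have hne : Function.update a i (!a i) ≠ a := by
    intro e
    have := congrFun e i
    simp at this
  simp only [Pi.mul_apply, Pi.inv_apply, Pi.mulSingle_eq_same, Pi.mulSingle_eq_of_ne hne,
    one_mul, inv_one, mul_one, h0] at h1
  exact h1.symm

/-- At most `n` elements of `X ∪ {1}` produce nothing outside `X ∪ {1}`. -/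
lemma copCn_subset {Z : Set (CubeGroup n)} (hZ : Z ⊆ insert 1 (X n)) :
    copCn n Z ⊆ insert 1 (X n) := by
  intro f hf
  simp only [copCn, Set.mem_iUnion] at hf
  obtain ⟨Y, ⟨hYZ, hcard⟩, hfY⟩ := hf
  have hY := hYZ.trans hZ
  rcases hfY with hfY | hfY
  · exact hY hfY
  left
  have hmiss : ¬ X n ⊆ Y := by
    intro hXY
    have := Set.ncard_le_ncard hXY (Set.toFinite _)
    rw [ncard_X] at this
    omega
  obtain ⟨x, hxX, hxY⟩ := Set.not_subset.1 hmiss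
  rcases hxX with rfl | ⟨i, rfl⟩
  · refine eq_one_of_conj_reflValued (conj_mem ?_ hfY)
    intro y hy
    rcases hY hy with rfl | rfl | ⟨j, rfl⟩
    · exact one_mem _
    · exact absurd hy hxY
    · intro a
      by_cases ha : a j = true <;> simp [h, ha]
  · refine eq_one_of_conj_indep i (conj_mem ?_ hfY)
    intro y hy
    rcases hY hy with rfl | rfl | ⟨j, rfl⟩
    · exact one_mem _
    · exact fun _ => rfl
    · have hji : j ≠ i := by
        rintro rfl
        exact hxY hy
      intro a
      simp [h, Function.update_of_ne hji]

lemma copCnIter_subset (k : ℕ) : copCnIter n (X n) k ⊆ insert 1 (X n) := by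
  induction k with
  | zero => exact copCn_subset (Set.subset_insert _ _)
  | succ k ih => exact copCn_subset ih

lemma mem_copC_X : w n ∈ copC (X n) := by
  right
  refine Set.mem_iInter.2 fun σ => ?_
  set K := Subgroup.closure ((fun g => (σ g)⁻¹ * g * σ g) '' X n)
  have hc : (σ (c n))⁻¹ * c n * σ (c n) ∈ K :=
    Subgroup.subset_closure ⟨_, Or.inl rfl, rfl⟩
  have hh : ∀ i, (σ (h i))⁻¹ * h i * σ (h i) ∈ K := fun i =>
    Subgroup.subset_closure ⟨_, Or.inr ⟨i, rfl⟩, rfl⟩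
  set c' := (σ (c n))⁻¹ * c n * σ (c n)
  -- `K` contains the restriction of `c'` to every face `{a | ∀ i ∈ s, aᵢ = 1}`
  have key : ∀ s : Finset (Fin n),
      (fun a => if ∀ i ∈ s, a i = true then c' a else 1 : CubeGroup n) ∈ K := by
    intro s
    induction s using Finset.induction_on with
    | empty => simpa using hc
    | insert i s _ ih =>
      have := K.mul_mem (K.mul_mem (K.mul_mem (hh i) ih) (K.inv_mem (hh i))) (K.inv_mem ih)
      convert this using 1
      funext a
      by_cases hs : ∀ j ∈ s, a j = true
      · by_cases hi : a i = true
        · have h3 : ∀ j ∈ insert i s, a j = true := by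
            simpa [hi] using hs
          simp only [Pi.mul_apply, Pi.inv_apply, if_pos hs, if_pos h3, h, hi, if_true]
          exact (comm_conj _ _).symm
        · have h3 : ¬ ∀ j ∈ insert i s, a j = true := fun e => hi (e i (by simp))
          simp only [Pi.mul_apply, Pi.inv_apply, if_pos hs, if_neg h3, h, if_neg hi]
          group
      · have h3 : ¬ ∀ j ∈ insert i s, a j = true := fun e =>
          hs fun j hj => e j (Finset.mem_insert_of_mem hj)
        simp only [Pi.mul_apply, Pi.inv_apply, if_neg hs, if_neg h3]
        group
  have hu := key Finset.univ
  simp only [Finset.mem_univ, true_imp_iff] at hu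
  have htop : ∀ a : Fin n → Bool, (∀ i, a i = true) → a = fun _ => true := fun a ha => funext ha
  rcases conj_rot (σ (c n) fun _ => true) with h1 | h1
  · have : w n = fun a => if ∀ i, a i = true then c' a else 1 := by
      funext a
      by_cases ha : ∀ i, a i = true
      · simp only [w, if_pos ha]
        rw [htop a ha]
        exact h1.symm
      · simp only [w, if_neg ha]
    rw [this]
    exact hu
  · have : w n = (fun a => if ∀ i, a i = true then c' a else 1 : CubeGroup n)⁻¹ := by
      funext a
      by_cases ha : ∀ i, a i = true
      · simp only [w, if_pos ha, Pi.inv_apply]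
        rw [htop a ha]
        exact (inv_eq_iff_eq_inv.2 h1).symm
      · simp only [w, if_neg ha, Pi.inv_apply, inv_one]
    rw [this]
    exact K.inv_mem hu

lemma w_not_mem (hn : 0 < n) : w n ∉ insert 1 (X n) := by
  have htop : w n (fun _ => true) = rot := by simp [w]
  rintro (e | e | ⟨i, e⟩)
  · rw [e] at htop
    exact rot_ne_one htop.symm
  · have hbot : w n (fun _ => false) = 1 := by
      have : ¬ ∀ i : Fin n, false = true := fun e => Bool.noConfusion (e ⟨0, hn⟩)
      simp only [w, if_neg this]
    rw [e] at hbot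
    exact rot_ne_one hbot
  · rw [← e] at htop
    simp only [h, if_true] at htop
    exact rot_ne_refl htop.symm

end NotNary

/-- For every integer `n ≥ 2` there is a finite group which is not
invariable `n`-ary. -/
theorem stmt13 (n : ℕ) (hn : 2 ≤ n) :
    ∃ (G : Type) (instG : Group G), Finite G ∧ ¬ @InvariableNary G instG n := by
  refine ⟨NotNary.CubeGroup n, inferInstance, inferInstance, fun hG => ?_⟩
  have hw := NotNary.mem_copC_X (n := n)
  rw [hG (NotNary.X n)] at hw
  obtain ⟨k, hk⟩ := Set.mem_iUnion.1 hw
  exact NotNary.w_not_mem (by omega) (NotNary.copCnIter_subset k hk)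
end

section
/- Let G be a finite group. Then Φ_I(G) coincides with the set of elements of G that can be dropped from any invariable generating set; that is, Φ_I(G) = {x ∈ G : for every subset X of G, if {x} ∪ X invariably generates G then X invariably generates G}. -/
/-- `Σ(G)`: the maximal members, under inclusion, of the family of unions of
conjugates of proper subgroups of `G`. -/
def sigmaInv (G : Type*) [Group G] : Set (Set G) :=
  {X | (∃ M : Subgroup G, M ≠ ⊤ ∧ X = conjUnion M) ∧
    ∀ Y : Set G, (∃ M : Subgroup G, M ≠ ⊤ ∧ Y = conjUnion M) → X ⊆ Y → X = Y}

/-- `Φ_I(G)`: the intersection of the members of `Σ(G)`. -/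
def phiInv (G : Type*) [Group G] : Set G :=
  ⋂ X ∈ sigmaInv G, X

theorem invGen_iff_s16 {G : Type*} [Group G] (S : Set G) :
    InvGen S ↔ ∀ M : Subgroup G, M ≠ ⊤ → ¬ S ⊆ conjUnion M := by
  constructor
  · intro h M hM hS
    have key : ∀ s : G, ∃ g : G, s ∈ S → g⁻¹ * s * g ∈ M := by
      intro s
      by_cases hs : s ∈ S
      · obtain ⟨g, m, hm, rfl⟩ := Set.mem_iUnion.1 (hS hs)
        refine ⟨g⁻¹, fun _ => ?_⟩
        have e : (g⁻¹)⁻¹ * (g⁻¹ * m * g) * g⁻¹ = m := by group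
        exact e.symm ▸ hm
      · exact ⟨1, fun h' => absurd h' hs⟩
    choose σ hσ using key
    refine hM (top_le_iff.1 ((h σ).symm.le.trans ((Subgroup.closure_le M).2 ?_)))
    rintro _ ⟨s, hs, rfl⟩
    exact hσ s hs
  · intro h σ
    by_contra hne
    refine h _ hne fun s hs => Set.mem_iUnion.2 ⟨(σ s)⁻¹, (σ s)⁻¹ * s * σ s,
      Subgroup.subset_closure ⟨s, hs, rfl⟩, ?_⟩
    group

theorem exists_sigmaInv_superset {G : Type*} [Group G] [Finite G] (M : Subgroup G) (hM : M ≠ ⊤) :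
    ∃ X ∈ sigmaInv G, conjUnion M ⊆ X := by
  obtain ⟨X, hX, hmax⟩ := (Set.toFinite
    {Y : Set G | ∃ N : Subgroup G, N ≠ ⊤ ∧ Y = conjUnion N}).exists_le_maximal ⟨M, hM, rfl⟩
  exact ⟨X, ⟨hmax.1, fun Y hY hXY => hXY.antisymm (hmax.2 hY hXY)⟩, hX⟩

/-- `Φ_I(G)` is the set of elements that can be dropped from any
invariable generating set of `G`. -/
theorem stmt16 (G : Type*) [Group G] [Finite G] :
    phiInv G = {x : G | ∀ X : Set G, InvGen ({x} ∪ X) → InvGen X} := by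
  ext x
  simp only [phiInv, Set.mem_iInter, Set.mem_ofPred_eq]
  constructor
  · intro hx X hX
    rw [invGen_iff_s16] at hX ⊢
    intro M hM hXM
    obtain ⟨Y, hY, hMY⟩ := exists_sigmaInv_superset M hM
    have hxY := hx Y hY
    obtain ⟨⟨N, hN, rfl⟩, -⟩ := hY
    exact hX N hN (Set.union_subset (Set.singleton_subset_iff.2 hxY) (hXM.trans hMY))
  · intro hx X hX
    obtain ⟨⟨M, hM, rfl⟩, hmax⟩ := hX
    by_contra hxM
    refine (invGen_iff_s16 _).1 (hx (conjUnion M) ((invGen_iff_s16 _).2 fun N hN hsub => hxM ?_))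
      M hM subset_rfl
    rw [hmax (conjUnion N) ⟨N, hN, rfl⟩ (Set.subset_union_right.trans hsub)]
    exact hsub (Or.inl rfl)
end
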